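/- arXiv:1005.5090 — 2 statements merged into one kernel-verified Lean document; each statement's English description precedes it below -/
import Mathlib

section
/- Let n ≥ 3 and let K ⊆ ℝⁿ be a closed convex set with nonempty interior, K ≠ ℝⁿ, that is strictly convex and regular. Let δ : S^{n−1} → ℝ be continuous, H(u) = {x ∈ ℝⁿ : ⟨x, u⟩ = δ(u)}, and assume that for every u ∈ S^{n−1} the set frontier K ∩ H(u) is an (n−1)-dimensional convex quadric in H(u). If there exist a real quadric surface Q ⊆ ℝⁿ and a nonempty set A ⊆ frontier K ∩ Q that is open in the subspace topology of frontier K, then frontier K is a convex quadric. -/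
open Set Metric RealInnerProductSpace

noncomputable section

/-- Euclidean n-space. -/
abbrev En (n : ℕ) := EuclideanSpace ℝ (Fin n)

/-- A quadric surface in ℝⁿ: the zero set of a quadratic polynomial whose quadratic
part (given by a symmetric matrix) is not identically zero. -/
def IsQuadricSurface {n : ℕ} (Q : Set (En n)) : Prop :=
  ∃ (a : Matrix (Fin n) (Fin n) ℝ) (b : Fin n → ℝ) (c : ℝ),
    a.IsSymm ∧ a ≠ 0 ∧
    Q = {x : En n | (∑ i, ∑ k, a i k * x i * x k) + 2 * (∑ i, b i * x i) + c = 0}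

/-- A real quadric surface: a nonempty quadric surface. -/
def IsRealQuadricSurface {n : ℕ} (Q : Set (En n)) : Prop :=
  IsQuadricSurface Q ∧ Q.Nonempty

/-- The set of connected components of a subset `F` of a topological space. -/
def componentsIn {α : Type*} [TopologicalSpace α] (F : Set α) : Set (Set α) :=
  {C | ∃ x ∈ F, C = connectedComponentIn F x}

/-- A convex quadric: the frontier of a convex connected component of the complement
of a real quadric surface. -/
def IsConvexQuadric {n : ℕ} (S : Set (En n)) : Prop :=
  ∃ Q U : Set (En n), IsRealQuadricSurface Q ∧ U ∈ componentsIn Qᶜ ∧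
    Convex ℝ U ∧ S = frontier U
/-- `S` is an (n−1)-dimensional convex quadric in the hyperplane `H ⊆ ℝⁿ`:
for some affine isometry φ : ℝ^{n−1} → ℝⁿ with image `H`, the set φ⁻¹(S) is a
convex quadric in ℝ^{n−1}. -/
def IsConvexQuadricIn {n : ℕ} (H S : Set (En n)) : Prop :=
  S ⊆ H ∧ ∃ φ : En (n - 1) →ᵃⁱ[ℝ] En n,
    Set.range (φ : En (n - 1) → En n) = H ∧ IsConvexQuadric ((φ : En (n - 1) → En n) ⁻¹' S)

/-- The hyperplane H(u) = {x : ⟨x, u⟩ = δ(u)} associated to a unit vector u. -/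
def sphHyp {n : ℕ} (δ : sphere (0 : En n) 1 → ℝ) (u : sphere (0 : En n) 1) : Set (En n) :=
  {x : En n | ⟪x, (u : En n)⟫ = δ u}
/-- `G` is a supporting hyperplane of `K` at the point `x`. -/
def IsSupportHyperplaneAt {n : ℕ} (K : Set (En n)) (x : En n) (G : Set (En n)) : Prop :=
  (∃ (v : En n) (c : ℝ), v ≠ 0 ∧ G = {y : En n | ⟪y, v⟫ = c}) ∧
    x ∈ G ∧ (G ∩ K).Nonempty ∧ G ∩ interior K = ∅

/-- `K` is strictly convex: its frontier contains no segment with distinct endpoints. -/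
def IsStrictlyConvexSet {n : ℕ} (K : Set (En n)) : Prop :=
  ∀ x ∈ frontier K, ∀ y ∈ frontier K, x ≠ y → ¬ segment ℝ x y ⊆ frontier K

/-- `K` is regular: every frontier point lies on exactly one supporting hyperplane. -/
def IsRegularSet {n : ℕ} (K : Set (En n)) : Prop :=
  ∀ x ∈ frontier K, ∃! G : Set (En n), IsSupportHyperplaneAt K x G

/-!
Let `q` be a quadratic function vanishing near a point of `frontier K`. The set of frontier points
near which `q` vanishes is open in `frontier K`, and `frontier K` is connected, so it suffices to
propagate vanishing locally.

If `a` and `y` are frontier points close to `x`, some `H(u)` contains both. Indeed, by regularity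
the unit normals at `a` and `y` are close to the unique one at `x`, so the intermediate value
theorem gives `u` near that normal with `u ⊥ a - y`. Since every `H(u)` meets the interior of `K`,
the function `u ↦ ⟪y, u⟫ - δ u` is positive at `u` and negative at `-u`, so it vanishes somewhere
on the connected sphere of unit vectors orthogonal to `a - y`.

Inside `H(u)` some quadratic function `r ≠ 0` vanishes on the section of `frontier K`, and `q`
vanishes on it near `a`. On a line through a point of the section near `a`, each of `q` and `r` is
the parameter times an affine function of it. Comparing the roots of these affine functions shows
that `q` vanishes on the whole section, in particular at `y`.
-/

open Topology Filter

section Topology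

variable {X : Type*} [TopologicalSpace X] {s u : Set X}

lemma subset_of_isPreconnected_of_disjoint_frontier (hs : IsPreconnected s) (hu : IsOpen u)
    (hne : (s ∩ u).Nonempty) (hdisj : Disjoint s (frontier u)) : s ⊆ u := by
  refine hs.subset_of_closure_inter_subset hu hne fun x ⟨hxu, hxs⟩ => ?_
  by_contra hx
  exact hdisj.notMem_of_mem_left hxs ⟨hxu, by rwa [hu.interior_eq]⟩

lemma frontier_connectedComponentIn_compl_subset [LocallyConnectedSpace X] (hs : IsClosed s)
    (x : X) : frontier (connectedComponentIn sᶜ x) ⊆ s := by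
  intro y hy
  by_contra hys
  have hopen : IsOpen (connectedComponentIn sᶜ y) := hs.isOpen_compl.connectedComponentIn
  obtain ⟨z, hzy, hzx⟩ := mem_closure_iff.1 hy.1 _ hopen (mem_connectedComponentIn hys)
  have hyx : y ∈ connectedComponentIn sᶜ x := by
    rw [connectedComponentIn_eq hzx, ← connectedComponentIn_eq hzy]
    exact mem_connectedComponentIn hys
  exact hy.2 (hs.isOpen_compl.connectedComponentIn.interior_eq.symm ▸ hyx)

lemma forall_mem_of_isPreconnected_of_eventually {p : X → Prop} (hs : IsPreconnected s)
    (hspread : ∀ x ∈ s, ∃ W ∈ 𝓝 x, ∀ a ∈ W ∩ s, (∀ᶠ z in 𝓝[s] a, p z) → ∀ y ∈ W ∩ s, p y)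
    {a : X} (ha : a ∈ s) (hpa : ∀ᶠ z in 𝓝[s] a, p z) : ∀ y ∈ s, p y := by
  intro y hy
  suffices h : (∀ᶠ z in 𝓝[s] a, p z) → ∀ᶠ z in 𝓝[s] y, p z from
    (h hpa).self_of_nhdsWithin hy
  refine hs.induction₂' (fun a y => (∀ᶠ z in 𝓝[s] a, p z) → ∀ᶠ z in 𝓝[s] y, p z)
    (fun x hx => ?_) (fun _ _ _ _ _ _ hxy hyz h => hyz (hxy h)) ha hy
  obtain ⟨W, hW, hspreadW⟩ := hspread x hx
  obtain ⟨V, hVW, hVopen, hxV⟩ := mem_nhds_iff.1 hW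
  have hspreadV : ∀ a ∈ V ∩ s, (∀ᶠ z in 𝓝[s] a, p z) → ∀ y ∈ V, ∀ᶠ z in 𝓝[s] y, p z := by
    intro a ha hpa y hy
    filter_upwards [inter_mem_nhdsWithin s (hVopen.mem_nhds hy)] with z hz
    exact hspreadW a ⟨hVW ha.1, ha.2⟩ hpa z ⟨hVW hz.2, hz.1⟩
  filter_upwards [inter_mem_nhdsWithin s (hVopen.mem_nhds hxV)] with z hz
  exact ⟨fun h => hspreadV x ⟨hxV, hx⟩ h z hz.2, fun h => hspreadV z hz.symm h x hxV⟩

lemma preimage_add_left_mem_nhds_zero {G : Type*} [AddGroup G] [TopologicalSpace G]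
    [ContinuousAdd G] {K : Set G} {p : G} (hp : p ∈ interior K) :
    (p + ·) ⁻¹' K ∈ 𝓝 0 :=
  (continuous_const_add p).continuousAt.preimage_mem_nhds
    (by rw [add_zero]; exact mem_interior_iff_mem_nhds.1 hp)

lemma preimage_add_left_ne_univ {G : Type*} [AddGroup G] {K : Set G} (hne : K ≠ univ) (p : G) :
    (p + ·) ⁻¹' K ≠ univ := by
  rwa [← preimage_univ (f := (p + ·)),
    (preimage_injective.2 (AddGroup.addLeft_bijective p).surjective).ne_iff]

end Topology

section QuadraticFunctions

variable {E F : Type*} [NormedAddCommGroup E] [NormedSpace ℝ E] [NormedAddCommGroup F]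
  [NormedSpace ℝ F] {q : E → ℝ}

/-- A quadratic function, that is, a continuous polynomial function of degree at most two.
The bilinear form is not required to be symmetric or nonzero. -/
def IsQuadraticFun (q : E → ℝ) : Prop :=
  ∃ (B : E →L[ℝ] E →L[ℝ] ℝ) (l : E →L[ℝ] ℝ) (c : ℝ), ∀ x, q x = B x x + l x + c

namespace IsQuadraticFun

lemma analyticOnNhd (hq : IsQuadraticFun q) : AnalyticOnNhd ℝ q univ := by
  obtain ⟨B, l, c, hq⟩ := hq
  have hB : AnalyticOnNhd ℝ (fun x => B x x) univ := fun x _ =>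
    (B.analyticAt_bilinear (x, x)).comp₂ analyticAt_id analyticAt_id
  rw [funext hq]
  exact (hB.add (l.analyticOnNhd univ)).add analyticOnNhd_const

lemma continuous (hq : IsQuadraticFun q) : Continuous q :=
  continuousOn_univ.1 hq.analyticOnNhd.continuousOn

lemma comp (hq : IsQuadraticFun q) (φ : F →ᴬ[ℝ] E) : IsQuadraticFun (q ∘ φ) := by
  obtain ⟨B, l, c, hq⟩ := hq
  refine ⟨(B.comp φ.contLinear).flip.comp φ.contLinear,
    ((B (φ 0) + B.flip (φ 0)) + l).comp φ.contLinear, q (φ 0), fun x => ?_⟩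
  have hφ : φ x = φ.contLinear x + φ 0 := congrFun φ.decomp x
  simp only [Function.comp_apply, hq, hφ, map_add, add_apply,
    ContinuousLinearMap.comp_apply, ContinuousLinearMap.flip_apply]
  ring

lemma exists_expansion (hq : IsQuadraticFun q) (a : E) :
    ∃ (B : E →L[ℝ] E →L[ℝ] ℝ) (l : E →L[ℝ] ℝ),
      ∀ (v : E) (t : ℝ), q (a + t • v) = q a + t * l v + t ^ 2 * B v v := by
  obtain ⟨B, l, c, hq⟩ := hq
  refine ⟨B, B a + B.flip a + l, fun v t => ?_⟩
  simp only [hq, map_add, map_smul, add_apply, smul_apply,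
    ContinuousLinearMap.flip_apply, smul_eq_mul]
  ring

lemma eq_zero_of_three_roots (hq : IsQuadraticFun q) {a v : E} {s t : ℝ} (hs : 0 < s) (ht : 0 < t)
    (ha : q a = 0) (has : q (a + s • v) = 0) (hat : q (a + t • -v) = 0) : q (a + v) = 0 := by
  obtain ⟨B, l, hexp⟩ := hq.exists_expansion a
  have hs_root : l v + s * B v v = 0 := by
    refine (mul_eq_zero.1 ?_).resolve_left hs.ne'
    linear_combination has - ha - hexp v s
  have ht_root : - l v + t * B v v = 0 := by
    refine (mul_eq_zero.1 ?_).resolve_left ht.ne'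
    have := hexp (-v) t
    simp only [map_neg, neg_apply, neg_neg] at this
    linear_combination hat - ha - this
  have hB : B v v = 0 := by
    refine (mul_eq_zero.1 ?_).resolve_left (add_pos hs ht).ne'
    linear_combination hs_root + ht_root
  have := hexp v 1
  rw [one_smul] at this
  rw [this, ha, hB]
  linear_combination hs_root - s * hB

end IsQuadraticFun

end QuadraticFunctions

section Coordinates

variable {n : ℕ}

lemma isQuadraticFun_coordinates (a : Matrix (Fin n) (Fin n) ℝ) (b : Fin n → ℝ) (c : ℝ) :
    IsQuadraticFun fun x : En n => (∑ i, ∑ k, a i k * x i * x k) + 2 * (∑ i, b i * x i) + c := by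
  let coord (i : Fin n) : En n →L[ℝ] ℝ := EuclideanSpace.proj i
  refine ⟨∑ i, ∑ k, a i k • (coord i).smulRight (coord k), (2 : ℝ) • ∑ i, b i • coord i, c,
    fun x => ?_⟩
  simp [coord, mul_assoc]

lemma matrix_eq_zero_of_forall_quadratic_eq_zero {a : Matrix (Fin n) (Fin n) ℝ} (ha : a.IsSymm)
    {b : Fin n → ℝ} {c : ℝ}
    (h : ∀ x : En n, (∑ i, ∑ k, a i k * x i * x k) + 2 * (∑ i, b i * x i) + c = 0) : a = 0 := by
  have hc : c = 0 := by simpa using h 0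
  have hform (x : En n) : ∑ i, ∑ k, a i k * x i * x k = 0 := by
    have hneg := h (-x)
    simp only [PiLp.neg_apply, mul_neg, neg_mul, neg_neg, Finset.sum_neg_distrib] at hneg
    linear_combination (h x + hneg) / 2 - hc
  have hdiag (i : Fin n) : a i i = 0 := by simpa using hform (EuclideanSpace.single i 1)
  ext i j
  have hpolar := hform (EuclideanSpace.single i 1 + EuclideanSpace.single j 1)
  have hsum : a i j + a j i = 0 := by
    simpa [mul_add, Finset.sum_add_distrib, hdiag, add_comm] using hpolar
  rw [Matrix.zero_apply]
  linarith [ha.apply i j]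

lemma IsQuadricSurface.exists_isQuadraticFun {Q : Set (En n)} (hQ : IsQuadricSurface Q) :
    ∃ q, IsQuadraticFun q ∧ q ≠ 0 ∧ Q = {x | q x = 0} := by
  obtain ⟨a, b, c, hsymm, ha, rfl⟩ := hQ
  exact ⟨_, isQuadraticFun_coordinates a b c,
    fun h => ha (matrix_eq_zero_of_forall_quadratic_eq_zero hsymm (congrFun h)), rfl⟩

end Coordinates

section StrictConvexSets

variable {E F : Type*} [NormedAddCommGroup E] [NormedSpace ℝ E] [NormedAddCommGroup F]
  [NormedSpace ℝ F] {K : Set E}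

lemma inv_gauge_smul_mem_frontier (hconv : Convex ℝ K) (h0 : K ∈ 𝓝 0) {v : E}
    (hv : 0 < gauge K v) : (gauge K v)⁻¹ • v ∈ frontier K := by
  rw [← gauge_eq_one_iff_mem_frontier hconv h0, gauge_smul_of_nonneg (inv_nonneg.2 hv.le),
    smul_eq_mul, inv_mul_cancel₀ hv.ne']

lemma eq_zero_of_gauge_eq_zero_of_gauge_neg_eq_zero (hK : StrictConvex ℝ K) (hcl : IsClosed K)
    (h0 : K ∈ 𝓝 0) (hne : K ≠ univ) {v : E} (hv : gauge K v = 0) (hnv : gauge K (-v) = 0) :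
    v = 0 := by
  by_contra hv0
  obtain ⟨x, hx⟩ : (frontier K).Nonempty := nonempty_frontier_iff.2 ⟨⟨0, mem_of_mem_nhds h0⟩, hne⟩
  have hgx : gauge K x = 1 := (gauge_eq_one_iff_mem_frontier hK.convex h0).2 hx
  have hmem : ∀ w, gauge K w = 0 → x + w ∈ K := fun w hw => by
    rw [← hcl.closure_eq, ← gauge_le_one_iff_mem_closure hK.convex h0]
    linarith [gauge_add_le hK.convex (absorbent_nhds_zero h0) x w]
  have hxint : x ∈ interior K := by
    have hdistinct : x + v ≠ x + -v := fun h => hv0 <| by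
      have : (2 : ℝ) • v = 0 := by rw [two_smul, add_eq_zero_iff_eq_neg.2 (add_left_cancel h)]
      exact (smul_eq_zero.1 this).resolve_left two_ne_zero
    have := hK (hmem v hv) (hmem (-v) hnv) hdistinct one_half_pos one_half_pos (add_halves 1)
    rwa [show (1 / 2 : ℝ) • (x + v) + (1 / 2 : ℝ) • (x + -v) = x by module] at this
  exact hx.2 hxint

-- If the gauge vanishes at some `z ≠ 0` (`K` contains a ray), the set is star-shaped about `-z`,
-- and otherwise it is the complement of the origin.
lemma isPreconnected_setOf_gauge_pos (hrank : 1 < Module.rank ℝ E) (hK : StrictConvex ℝ K)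
    (hcl : IsClosed K) (h0 : K ∈ 𝓝 0) (hne : K ≠ univ) :
    IsPreconnected {v : E | 0 < gauge K v} := by
  by_cases hz : ∃ z ≠ 0, gauge K z = 0
  · obtain ⟨z, hz0, hz⟩ := hz
    have hnz : 0 < gauge K (-z) := (gauge_nonneg _).lt_of_ne' fun h =>
      hz0 (eq_zero_of_gauge_eq_zero_of_gauge_neg_eq_zero hK hcl h0 hne hz h)
    suffices hstar : StarConvex ℝ (-z) {v : E | 0 < gauge K v} from
      (hstar.isPathConnected hnz).isConnected.isPreconnected
    rw [starConvex_iff_forall_pos (show -z ∈ {v : E | 0 < gauge K v} from hnz)]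
    intro v hv a b ha hb _
    have hle := gauge_add_le hK.convex (absorbent_nhds_zero h0) (a • -z + b • v) (a • z)
    rw [show a • -z + b • v + a • z = b • v by module, gauge_smul_of_nonneg ha.le,
      gauge_smul_of_nonneg hb.le, hz, smul_zero, add_zero] at hle
    exact (mul_pos hb hv).trans_le hle
  · push Not at hz
    have : {v : E | 0 < gauge K v} = {0}ᶜ := by
      ext v
      refine ⟨?_, fun hv => (gauge_nonneg v).lt_of_ne' (hz v hv)⟩
      rintro hv rfl
      exact (ne_of_gt hv) gauge_zero
    rw [this]
    exact (isConnected_compl_singleton_of_one_lt_rank hrank 0).isPreconnected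

lemma isPreconnected_frontier_of_mem_nhds_zero (hrank : 1 < Module.rank ℝ E)
    (hK : StrictConvex ℝ K) (hcl : IsClosed K) (h0 : K ∈ 𝓝 0) (hne : K ≠ univ) :
    IsPreconnected (frontier K) := by
  have himage : (fun v => (gauge K v)⁻¹ • v) '' {v | 0 < gauge K v} = frontier K := by
    refine Subset.antisymm ?_ fun x hx => ?_
    · rintro _ ⟨v, hv, rfl⟩
      exact inv_gauge_smul_mem_frontier hK.convex h0 hv
    · have hgx := (gauge_eq_one_iff_mem_frontier hK.convex h0).2 hx
      exact ⟨x, by simp [hgx], by simp [hgx]⟩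
  rw [← himage]
  refine (isPreconnected_setOf_gauge_pos hrank hK hcl h0 hne).image _ ?_
  exact ((continuous_gauge hK.convex h0).continuousOn.inv₀ fun v hv => hv.ne').smul continuousOn_id

lemma exists_gauge_pos_and_gauge_neg_pos (hrank : 1 < Module.rank ℝ E) (hK : StrictConvex ℝ K)
    (hcl : IsClosed K) (h0 : K ∈ 𝓝 0) (hne : K ≠ univ) :
    ∃ v, 0 < gauge K v ∧ 0 < gauge K (-v) := by
  have hcont := continuous_gauge hK.convex h0
  have hor : ∀ v ∈ ({0}ᶜ : Set E), 0 < gauge K v ∨ 0 < gauge K (-v) := by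
    intro v hv
    by_contra! h
    exact hv (eq_zero_of_gauge_eq_zero_of_gauge_neg_eq_zero hK hcl h0 hne
      (h.1.antisymm (gauge_nonneg _)) (h.2.antisymm (gauge_nonneg _)))
  have hconn := isConnected_compl_singleton_of_one_lt_rank hrank (0 : E)
  obtain ⟨v, hv0, hv⟩ : ∃ v ∈ ({0}ᶜ : Set E), 0 < gauge K v := by
    obtain ⟨v, hv0⟩ := hconn.nonempty
    exact (hor v hv0).elim (fun h => ⟨v, hv0, h⟩) fun h => ⟨-v, neg_ne_zero.2 hv0, h⟩
  obtain ⟨w, -, hw⟩ := hconn.isPreconnected _ _ (isOpen_lt continuous_const hcont)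
    (isOpen_lt continuous_const (hcont.comp continuous_neg)) hor ⟨v, hv0, hv⟩
    ⟨-v, neg_ne_zero.2 hv0, by simpa using hv⟩
  exact ⟨w, hw⟩

lemma IsQuadraticFun.eq_zero_of_zero_on_frontier_of_mem_nhds_zero (hrank : 1 < Module.rank ℝ E)
    (hK : StrictConvex ℝ K) (hcl : IsClosed K) (h0 : K ∈ 𝓝 0) (hne : K ≠ univ) {q : E → ℝ}
    (hq : IsQuadraticFun q) (hfr : ∀ x ∈ frontier K, q x = 0) (hq0 : q 0 = 0) : q = 0 := by
  have hcont := continuous_gauge hK.convex h0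
  obtain ⟨w, hw⟩ := exists_gauge_pos_and_gauge_neg_pos hrank hK hcl h0 hne
  refine hq.analyticOnNhd.eq_of_eventuallyEq (z₀ := w) analyticOnNhd_const ?_
  filter_upwards [hcont.continuousAt.eventually_const_lt hw.1,
    (hcont.comp continuous_neg).continuousAt.eventually_const_lt hw.2] with v hv hnv
  rw [← zero_add v]
  refine hq.eq_zero_of_three_roots (inv_pos.2 hv) (inv_pos.2 hnv) hq0 (hfr _ ?_) (hfr _ ?_) <;>
    rw [zero_add]
  · exact inv_gauge_smul_mem_frontier hK.convex h0 hv
  · exact inv_gauge_smul_mem_frontier hK.convex h0 hnv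

lemma isPreconnected_frontier_of_strictConvex (hrank : 1 < Module.rank ℝ E)
    (hK : StrictConvex ℝ K) (hcl : IsClosed K) (hint : (interior K).Nonempty) :
    IsPreconnected (frontier K) := by
  rcases eq_or_ne K univ with rfl | hne
  · simpa using isPreconnected_empty
  obtain ⟨p, hp⟩ := hint
  have hpre := isPreconnected_frontier_of_mem_nhds_zero hrank (hK.preimage_add_right p)
    (hcl.preimage (continuous_const_add p)) (preimage_add_left_mem_nhds_zero hp)
    (preimage_add_left_ne_univ hne p)
  rwa [← (Homeomorph.addLeft p).isPreconnected_preimage, (Homeomorph.addLeft p).preimage_frontier]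

lemma IsQuadraticFun.ne_zero_of_mem_interior (hrank : 1 < Module.rank ℝ E)
    (hK : StrictConvex ℝ K) (hcl : IsClosed K) (hne : K ≠ univ) {q : E → ℝ}
    (hq : IsQuadraticFun q) (hq0 : q ≠ 0) (hfr : ∀ x ∈ frontier K, q x = 0) {p : E}
    (hp : p ∈ interior K) : q p ≠ 0 := by
  intro hqp
  have hcomp : IsQuadraticFun (q ∘ (p + ·)) :=
    hq.comp (ContinuousAffineMap.const ℝ E p + ContinuousAffineMap.id ℝ E)
  have hzero : q ∘ (p + ·) = 0 := by
    refine hcomp.eq_zero_of_zero_on_frontier_of_mem_nhds_zero hrank (hK.preimage_add_right p)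
      (hcl.preimage (continuous_const_add p)) (preimage_add_left_mem_nhds_zero hp)
      (preimage_add_left_ne_univ hne p) (fun x hx => hfr _ ?_) (by simpa using hqp)
    have := (Homeomorph.addLeft p).preimage_frontier K
    exact this.symm.subset hx
  exact hq0 (funext fun x => by simpa using congrFun hzero (x - p))

lemma add_smul_sub_notMem_of_one_lt (hK : StrictConvex ℝ K) {a y : E} (ha : a ∈ K)
    (hy : y ∈ frontier K) (hay : a ≠ y) {t : ℝ} (ht : 1 < t) : a + t • (y - a) ∉ K := by
  intro hz
  have ht0 : 0 < t := one_pos.trans ht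
  have hne : a ≠ a + t • (y - a) := fun h =>
    smul_ne_zero ht0.ne' (sub_ne_zero.2 hay.symm) (left_eq_add.1 h)
  have hmem := hK.add_smul_sub_mem ha hz hne (inv_pos.2 ht0) (inv_lt_one_of_one_lt₀ ht)
  rw [add_sub_cancel_left, inv_smul_smul₀ ht0.ne', add_sub_cancel] at hmem
  exact hy.2 hmem

lemma exists_smul_mem_frontier_of_mem_interior_of_notMem {a v : E} {s t : ℝ} (hst : s ≤ t)
    (hs : a + s • v ∈ interior K) (ht : a + t • v ∉ K) :
    ∃ τ ∈ Icc s t, a + τ • v ∈ frontier K := by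
  by_contra! h
  have hline : IsPreconnected ((fun τ : ℝ => a + τ • v) '' Icc s t) :=
    isPreconnected_Icc.image _ (by fun_prop)
  refine ht (interior_subset (subset_of_isPreconnected_of_disjoint_frontier hline isOpen_interior
    ⟨_, mem_image_of_mem _ (left_mem_Icc.2 hst), hs⟩ ?_ (mem_image_of_mem _ (right_mem_Icc.2 hst))))
  rw [disjoint_left]
  rintro _ ⟨τ, hτ, rfl⟩ hfr
  exact h τ hτ (frontier_interior_subset hfr)

lemma eventually_exists_pos_smul_mem_frontier (hK : StrictConvex ℝ K) (hcl : IsClosed K) {a y : E}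
    (ha : a ∈ K) (hy : y ∈ frontier K) (hay : a ≠ y) {W : Set E} (hW : W ∈ 𝓝 y) :
    ∀ᶠ v in 𝓝 (y - a), ∃ t : ℝ, 0 < t ∧ a + t • v ∈ frontier K ∩ W := by
  have hnear : ∀ᶠ z in 𝓝 (1 : ℝ) ×ˢ 𝓝 (y - a), 0 < z.1 ∧ a + z.1 • z.2 ∈ W := by
    rw [← nhds_prod_eq]
    have hcont : ContinuousAt (fun z : ℝ × E => a + z.1 • z.2) (1, y - a) := by fun_prop
    exact (continuousAt_fst.tendsto.eventually_const_lt one_pos).and (hcont (by simpa using hW))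
  obtain ⟨P, hP, R, hR, hPR⟩ := eventually_prod_iff.1 hnear
  obtain ⟨ε, hε, hεP⟩ := (nhds_basis_Icc_pos (1 : ℝ)).eventually_iff.1 hP
  have hle : 1 - ε ≤ 1 + ε := by linarith
  have hin : a + (1 - ε) • (y - a) ∈ interior K :=
    hK.add_smul_sub_mem ha (hcl.frontier_subset hy) hay
      (hPR (hεP (left_mem_Icc.2 hle)) hR.self_of_nhds).1 (by linarith)
  have hout : a + (1 + ε) • (y - a) ∉ K :=
    add_smul_sub_notMem_of_one_lt hK ha hy hay (by linarith)
  have hray (t : ℝ) : ContinuousAt (fun v : E => a + t • v) (y - a) := by fun_prop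
  filter_upwards [hR, hray (1 - ε) (isOpen_interior.mem_nhds hin),
    hray (1 + ε) (hcl.isOpen_compl.mem_nhds hout)] with v hvR hv_in hv_out
  obtain ⟨t, ht, htfr⟩ := exists_smul_mem_frontier_of_mem_interior_of_notMem hle hv_in hv_out
  have ⟨htpos, htW⟩ := hPR (hεP ht) hvR
  exact ⟨t, htpos, htfr, htW⟩

-- For `v` near `y - a` the ray from `a` in direction `v` leaves `K` at some `t > 0` where both
-- functions vanish, so `lq v + t * Bq v v = 0 = lr v + t * Br v v`. Eliminating `t` gives an
-- identity on an open set of directions, which extends to all of them by analyticity.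
lemma quadratic_mul_linear_eq_of_eventually_zero (hK : StrictConvex ℝ K) (hcl : IsClosed K)
    {q r : E → ℝ} {a : E} {Bq Br : E →L[ℝ] E →L[ℝ] ℝ} {lq lr : E →L[ℝ] ℝ}
    (hq : ∀ (v : E) (t : ℝ), q (a + t • v) = t * lq v + t ^ 2 * Bq v v)
    (hr : ∀ (v : E) (t : ℝ), r (a + t • v) = t * lr v + t ^ 2 * Br v v)
    (hrfr : ∀ x ∈ frontier K, r x = 0) (ha : a ∈ K) {y : E} (hy : y ∈ frontier K) (hay : a ≠ y)
    (hqy : ∀ᶠ z in 𝓝[frontier K] y, q z = 0) (v : E) : Br v v * lq v = Bq v v * lr v := by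
  have hanalytic (B : E →L[ℝ] E →L[ℝ] ℝ) (l : E →L[ℝ] ℝ) :
      AnalyticOnNhd ℝ (fun v => B v v * l v) univ := fun v _ =>
    ((B.analyticAt_bilinear (v, v)).comp₂ analyticAt_id analyticAt_id).mul (l.analyticAt v)
  refine congrFun ((hanalytic Br lq).eq_of_eventuallyEq (hanalytic Bq lr) (z₀ := y - a) ?_) v
  filter_upwards [eventually_exists_pos_smul_mem_frontier hK hcl ha hy hay
    (eventually_nhdsWithin_iff.1 hqy)] with v ⟨t, ht, hfr, hq0⟩
  have hqt : t * lq v + t ^ 2 * Bq v v = 0 := (hq v t).symm.trans (hq0 hfr)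
  have hrt : t * lr v + t ^ 2 * Br v v = 0 := (hr v t).symm.trans (hrfr _ hfr)
  refine mul_left_cancel₀ ht.ne' ?_
  linear_combination Br v v * hqt - Bq v v * hrt

lemma IsQuadraticFun.eq_zero_of_eventually_eq_zero_on_frontier (hrank : 1 < Module.rank ℝ E)
    (hK : StrictConvex ℝ K) (hcl : IsClosed K) {q r : E → ℝ}
    (hq : IsQuadraticFun q) (hr : IsQuadraticFun r) (hr0 : r ≠ 0)
    (hrfr : ∀ x ∈ frontier K, r x = 0) {a y : E} (ha : a ∈ frontier K)
    (hqa : ∀ᶠ z in 𝓝[frontier K] a, q z = 0) (hy : y ∈ frontier K) : q y = 0 := by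
  rcases eq_or_ne a y with rfl | hay
  · exact hqa.self_of_nhdsWithin hy
  have hne : K ≠ univ := fun h => by simp [h] at ha
  have haK := hcl.frontier_subset ha
  have hmid := hK.add_smul_sub_mem haK (hcl.frontier_subset hy) hay one_half_pos one_half_lt_one
  have hacc : AccPt a (𝓟 (frontier K)) :=
    (isPreconnected_frontier_of_strictConvex hrank hK hcl ⟨_, hmid⟩).preperfect_of_nontrivial
      ⟨a, ha, y, hy, hay⟩ a ha
  obtain ⟨b, ⟨hba, hb⟩, hbq⟩ := ((accPt_iff_frequently.1 hacc).and_eventually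
    (eventually_nhds_nhdsWithin.2 hqa)).exists
  obtain ⟨Bq, lq, hqexp⟩ := hq.exists_expansion a
  obtain ⟨Br, lr, hrexp⟩ := hr.exists_expansion a
  simp only [hqa.self_of_nhdsWithin ha, hrfr a ha, zero_add] at hqexp hrexp
  have hcross := quadratic_mul_linear_eq_of_eventually_zero hK hcl hqexp hrexp hrfr haK hb hba.symm
    hbq (y - a)
  have hqy := hqexp (y - a) 1
  have hry := hrexp (y - a) 1
  rw [one_smul, add_sub_cancel] at hqy hry
  rw [hrfr y hy] at hry
  have hBr : Br (y - a) (y - a) ≠ 0 := fun h0 => by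
    refine hr.ne_zero_of_mem_interior hrank hK hcl hne hr0 hrfr hmid ?_
    rw [hrexp, h0]
    linear_combination -hry / 2 - h0 / 2
  refine mul_left_cancel₀ hBr ?_
  rw [hqy]
  linear_combination hcross - Bq (y - a) (y - a) * hry

lemma interior_preimage_affine (hK : Convex ℝ K) (φ : F →ᴬ[ℝ] E) {o : F} (ho : φ o ∈ interior K) :
    interior (φ ⁻¹' K) = φ ⁻¹' interior K := by
  refine Subset.antisymm (fun x hx => ?_) (preimage_interior_subset_interior_preimage φ.continuous)
  have hcont : ContinuousAt (fun t : ℝ => AffineMap.lineMap o x t) 1 :=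
    AffineMap.lineMap_continuous.continuousAt
  obtain ⟨t, hxt, ht⟩ : ∃ t : ℝ, AffineMap.lineMap o x t ∈ φ ⁻¹' K ∧ 1 < t := by
    have hev : ∀ᶠ t in 𝓝 (1 : ℝ), AffineMap.lineMap o x t ∈ φ ⁻¹' K :=
      hcont (by simpa using mem_interior_iff_mem_nhds.1 hx)
    exact ((hev.filter_mono nhdsWithin_le_nhds).and self_mem_nhdsWithin).exists (f := 𝓝[>] 1)
  have hxseg : x ∈ openSegment ℝ o (AffineMap.lineMap o x t) := by
    have hpos : 0 < t := one_pos.trans ht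
    have := lineMap_mem_openSegment ℝ o (AffineMap.lineMap o x t)
      ⟨inv_pos.2 hpos, inv_lt_one_of_one_lt₀ ht⟩
    rwa [AffineMap.lineMap_lineMap_right, inv_mul_cancel₀ hpos.ne', AffineMap.lineMap_apply_one]
      at this
  refine hK.openSegment_interior_self_subset_interior ho hxt ?_
  exact (image_openSegment ℝ φ.toAffineMap o _).subset (mem_image_of_mem φ hxseg)

lemma frontier_preimage_affine (hK : Convex ℝ K) (hcl : IsClosed K) (φ : F →ᴬ[ℝ] E) {o : F}
    (ho : φ o ∈ interior K) : frontier (φ ⁻¹' K) = φ ⁻¹' frontier K := by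
  rw [(hcl.preimage φ.continuous).frontier_eq, hcl.frontier_eq, interior_preimage_affine hK φ ho,
    preimage_sdiff]

lemma frontier_interior_of_convex (hK : Convex ℝ K) (hint : (interior K).Nonempty) :
    frontier (interior K) = frontier K := by
  rw [frontier, frontier, interior_interior,
    hK.closure_interior_eq_closure_of_nonempty_interior hint]

lemma nontrivial_frontier_of_isOpen_of_convex (hrank : 1 < Module.rank ℝ E) {U : Set E}
    (hU : IsOpen U) (hconv : Convex ℝ U) (hne : U.Nonempty) (hfr : (frontier U).Nonempty) :
    (frontier U).Nontrivial := by
  obtain ⟨p, hp⟩ := hfr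
  refine (nontrivial_iff_ne_singleton hp).2 fun hsingle => ?_
  have hpU : p ∉ U := fun h => hp.2 (hU.interior_eq.symm ▸ h)
  obtain ⟨u, hu⟩ := hne
  have hup : u ≠ p := fun h => hpU (h ▸ hu)
  have hsub : {p}ᶜ ⊆ U :=
    subset_of_isPreconnected_of_disjoint_frontier
      (isConnected_compl_singleton_of_one_lt_rank hrank p).isPreconnected hU ⟨u, hup, hu⟩
      (hsingle ▸ disjoint_compl_left)
  have hreflect : p - (u - p) ∈ U := hsub fun h => sub_ne_zero.2 hup (sub_eq_self.1 h)
  refine hpU (hconv.openSegment_subset hreflect ?_ (mem_openSegment_sub_add p (u - p)))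
  rwa [add_sub_cancel]

end StrictConvexSets

section ConvexQuadrics

variable {m n : ℕ}

lemma one_lt_rank_En (hm : 2 ≤ m) : 1 < Module.rank ℝ (En m) := by
  rw [← Module.finrank_eq_rank, finrank_euclideanSpace_fin]
  exact_mod_cast hm

lemma IsQuadricSurface.isClosed {Q : Set (En n)} (hQ : IsQuadricSurface Q) : IsClosed Q := by
  obtain ⟨q, hq, -, rfl⟩ := hQ.exists_isQuadraticFun
  exact isClosed_eq hq.continuous continuous_const

lemma IsConvexQuadric.nontrivial {S : Set (En m)} (hm : 2 ≤ m) (hS : IsConvexQuadric S) :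
    S.Nontrivial := by
  obtain ⟨Q, U, ⟨hQ, z, hz⟩, ⟨x, hx, rfl⟩, hconv, rfl⟩ := hS
  have hne : (connectedComponentIn Qᶜ x).Nonempty := ⟨x, mem_connectedComponentIn hx⟩
  refine nontrivial_frontier_of_isOpen_of_convex (one_lt_rank_En hm)
    hQ.isClosed.isOpen_compl.connectedComponentIn hconv hne (nonempty_frontier_iff.2 ⟨hne, ?_⟩)
  exact fun h => connectedComponentIn_subset Qᶜ x (h ▸ mem_univ z) hz

lemma IsConvexQuadric.exists_isQuadraticFun {S : Set (En n)} (hS : IsConvexQuadric S) :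
    ∃ q, IsQuadraticFun q ∧ q ≠ 0 ∧ ∀ x ∈ S, q x = 0 := by
  obtain ⟨Q, U, ⟨hQ, -⟩, ⟨x, -, rfl⟩, -, rfl⟩ := hS
  have hsub := frontier_connectedComponentIn_compl_subset hQ.isClosed x
  obtain ⟨q, hq, hq0, rfl⟩ := hQ.exists_isQuadraticFun
  exact ⟨q, hq, hq0, hsub⟩

lemma IsConvexQuadricIn.exists_affineIsometry {H T : Set (En n)}
    (hsec : IsConvexQuadricIn H (T ∩ H)) :
    ∃ φ : En (n - 1) →ᵃⁱ[ℝ] En n, range φ = H ∧ IsConvexQuadric (φ ⁻¹' T) := by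
  obtain ⟨-, φ, rfl, hφ⟩ := hsec
  refine ⟨φ, rfl, ?_⟩
  rwa [preimage_inter, preimage_range, inter_univ] at hφ

variable {K : Set (En n)}

lemma exists_mem_interior_of_isConvexQuadric_preimage (hm : 2 ≤ m) (hK : StrictConvex ℝ K)
    (hcl : IsClosed K) (φ : En m →ᵃⁱ[ℝ] En n) (hφ : IsConvexQuadric (φ ⁻¹' frontier K)) :
    ∃ o, φ o ∈ interior K := by
  obtain ⟨x, hx, y, hy, hxy⟩ := hφ.nontrivial hm
  refine ⟨midpoint ℝ x y, ?_⟩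
  rw [show φ (midpoint ℝ x y) = midpoint ℝ (φ x) (φ y) from φ.toAffineMap.map_midpoint x y]
  exact hK.openSegment_subset (hcl.frontier_subset hx) (hcl.frontier_subset hy)
    (φ.injective.ne hxy) (midpoint_mem_openSegment _ _)

lemma IsConvexQuadricIn.inter_interior_nonempty (hn : 3 ≤ n) (hK : StrictConvex ℝ K)
    (hcl : IsClosed K) {H : Set (En n)} (hsec : IsConvexQuadricIn H (frontier K ∩ H)) :
    (H ∩ interior K).Nonempty := by
  obtain ⟨φ, rfl, hφ⟩ := hsec.exists_affineIsometry
  obtain ⟨o, ho⟩ := exists_mem_interior_of_isConvexQuadric_preimage (by lia) hK hcl φ hφ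
  exact ⟨φ o, mem_range_self o, ho⟩

lemma IsConvexQuadricIn.eq_zero_of_eventually_eq_zero (hn : 3 ≤ n) (hK : StrictConvex ℝ K)
    (hcl : IsClosed K) {H : Set (En n)} (hsec : IsConvexQuadricIn H (frontier K ∩ H))
    {q : En n → ℝ} (hq : IsQuadraticFun q) {a y : En n} (ha : a ∈ frontier K ∩ H)
    (hqa : ∀ᶠ z in 𝓝[frontier K] a, q z = 0) (hy : y ∈ frontier K ∩ H) : q y = 0 := by
  obtain ⟨φ, rfl, hφ⟩ := hsec.exists_affineIsometry
  obtain ⟨haK, a, rfl⟩ := ha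
  obtain ⟨hyK, y, rfl⟩ := hy
  obtain ⟨o, ho⟩ := exists_mem_interior_of_isConvexQuadric_preimage (by lia) hK hcl φ hφ
  obtain ⟨r, hr, hr0, hrfr⟩ := hφ.exists_isQuadraticFun
  have hfr : frontier (φ ⁻¹' K) = φ ⁻¹' frontier K :=
    frontier_preimage_affine hK.convex hcl φ.toContinuousAffineMap ho
  have hKφ : StrictConvex ℝ (φ ⁻¹' K) :=
    hK.affine_preimage (f := φ.toAffineMap) φ.continuous φ.injective
  have hqφ : IsQuadraticFun (q ∘ φ) := hq.comp φ.toContinuousAffineMap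
  refine hqφ.eq_zero_of_eventually_eq_zero_on_frontier (one_lt_rank_En (by lia)) hKφ
    (hcl.preimage φ.continuous) hr hr0 (hfr ▸ hrfr) (hfr.superset haK) ?_ (hfr.superset hyK)
  rw [hfr]
  exact (φ.continuous.continuousWithinAt.tendsto_nhdsWithin (mapsTo_preimage _ _)).eventually hqa

lemma isConvexQuadric_frontier_of_subset (hn : 2 ≤ n) (hK : StrictConvex ℝ K) (hcl : IsClosed K)
    (hint : (interior K).Nonempty) (hne : K ≠ univ) {Q : Set (En n)}
    (hQ : IsRealQuadricSurface Q) (hsub : frontier K ⊆ Q) : IsConvexQuadric (frontier K) := by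
  have hdisj : interior K ⊆ Qᶜ := by
    obtain ⟨q, hq, hq0, rfl⟩ := hQ.1.exists_isQuadraticFun
    exact fun p hp => hq.ne_zero_of_mem_interior (one_lt_rank_En hn) hK hcl hne hq0 hsub hp
  have hfr := frontier_interior_of_convex hK.convex hint
  obtain ⟨p, hp⟩ := hint
  refine ⟨Q, interior K, hQ, ⟨p, hdisj hp, Subset.antisymm ?_ ?_⟩, hK.convex.interior, hfr.symm⟩
  · exact hK.convex.interior.isPreconnected.subset_connectedComponentIn hp hdisj
  · refine subset_of_isPreconnected_of_disjoint_frontier isPreconnected_connectedComponentIn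
      isOpen_interior ⟨p, mem_connectedComponentIn (hdisj hp), hp⟩ ?_
    rw [hfr]
    exact (disjoint_compl_left.mono_right hsub).mono_left (connectedComponentIn_subset _ _)

lemma IsStrictlyConvexSet.strictConvex (hsc : IsStrictlyConvexSet K) (hconv : Convex ℝ K)
    (hcl : IsClosed K) : StrictConvex ℝ K := by
  refine hconv.strictConvex fun x hx y hy hxy => ?_
  rw [← hcl.frontier_eq] at hx hy
  exact sdiff_nonempty.2 (hsc x hx y hy hxy)

end ConvexQuadrics

section UnitSphere

variable {E : Type*} [NormedAddCommGroup E] [InnerProductSpace ℝ E]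

lemma locallyConnectedSpace_unitSphere (hE : 0 < Module.finrank ℝ E) :
    LocallyConnectedSpace (sphere (0 : E) 1) := by
  have : Fact (Module.finrank ℝ E = Module.finrank ℝ E - 1 + 1) := ⟨by lia⟩
  exact ChartedSpace.locallyConnectedSpace (EuclideanSpace ℝ (Fin (Module.finrank ℝ E - 1))) _

lemma isPreconnected_unitSphere_inter_orthogonal [FiniteDimensional ℝ E]
    (hE : 2 < Module.finrank ℝ E) (d : E) :
    IsPreconnected {u : sphere (0 : E) 1 | ⟪d, (u : E)⟫ = 0} := by
  have hrank : 1 < Module.rank ℝ (ℝ ∙ d)ᗮ := by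
    have hadd := (ℝ ∙ d).finrank_add_finrank_orthogonal
    have hspan : Module.finrank ℝ (ℝ ∙ d) ≤ 1 := by simpa using finrank_span_le_card (R := ℝ) {d}
    rw [← Module.finrank_eq_rank, Nat.one_lt_cast]
    lia
  have : PreconnectedSpace (sphere (0 : (ℝ ∙ d)ᗮ) 1) :=
    Subtype.preconnectedSpace (isPreconnected_sphere hrank 0 1)
  let incl : sphere (0 : (ℝ ∙ d)ᗮ) 1 → sphere (0 : E) 1 := fun w =>
    ⟨w, mem_sphere_zero_iff_norm.2 (norm_eq_of_mem_sphere w)⟩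
  have hrange : range incl = {u : sphere (0 : E) 1 | ⟪d, (u : E)⟫ = 0} := by
    refine Subset.antisymm ?_ fun u hu => ?_
    · rintro _ ⟨w, rfl⟩
      exact Submodule.mem_orthogonal_singleton_iff_inner_right.1 w.1.2
    · exact ⟨⟨⟨u, Submodule.mem_orthogonal_singleton_iff_inner_right.2 hu⟩, by simp⟩, rfl⟩
  rw [← hrange]
  exact isPreconnected_range (by fun_prop)

end UnitSphere

section Normals

variable {E : Type*} [NormedAddCommGroup E] [InnerProductSpace ℝ E] {K : Set E} {x p w : E}

/-- The outward normal cone of `K` at `x`. Its unit vectors are the normals of the supporting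
hyperplanes of `K` through `x`, so a regular set has exactly one at each frontier point. -/
def normalCone (K : Set E) (x : E) : Set E := {w | ∀ z ∈ K, ⟪z - x, w⟫ ≤ 0}

lemma inner_sub_neg_of_mem_normalCone (hw : w ∈ normalCone K x) (hw0 : w ≠ 0)
    (hp : p ∈ interior K) : ⟪p - x, w⟫ < 0 := by
  have hcont : ContinuousAt (fun t : ℝ => p + t • w) 0 := by fun_prop
  have hev : ∀ᶠ t in 𝓝 (0 : ℝ), p + t • w ∈ K :=
    hcont (by simpa using mem_interior_iff_mem_nhds.1 hp)
  obtain ⟨t, htK, ht⟩ : ∃ t : ℝ, p + t • w ∈ K ∧ 0 < t :=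
    ((hev.filter_mono nhdsWithin_le_nhds).and self_mem_nhdsWithin).exists (f := 𝓝[>] 0)
  have hle := hw _ htK
  rw [add_sub_right_comm, inner_add_left, real_inner_smul_left] at hle
  linarith [mul_pos ht (real_inner_self_pos.2 hw0)]

lemma exists_unit_mem_normalCone [CompleteSpace E] (hconv : Convex ℝ K)
    (hint : (interior K).Nonempty) (hx : x ∉ interior K) :
    ∃ u : sphere (0 : E) 1, (u : E) ∈ normalCone K x := by
  obtain ⟨f, hf0, hf⟩ := geometric_hahn_banach_of_nonempty_interior_point hconv hx hint
  obtain ⟨v, rfl⟩ := (InnerProductSpace.toDual ℝ E).surjective f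
  have hv0 : v ≠ 0 := fun h => hf0 (by rw [h, map_zero])
  refine ⟨⟨‖v‖⁻¹ • v, by simp [norm_smul, hv0]⟩, fun z hz => ?_⟩
  have hle := hf z hz
  simp only [InnerProductSpace.toDual_apply_apply] at hle
  rw [real_inner_smul_right, real_inner_comm, inner_sub_right]
  exact mul_nonpos_of_nonneg_of_nonpos (by positivity) (by linarith)

lemma isClosed_setOf_mem_normalCone (K : Set E) :
    IsClosed {z : E × E | z.2 ∈ normalCone K z.1} := by
  have hInter : {z : E × E | z.2 ∈ normalCone K z.1} = ⋂ y ∈ K, {z | ⟪y - z.1, z.2⟫ ≤ 0} := by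
    ext z
    simp [normalCone]
  rw [hInter]
  exact isClosed_biInter fun z _ => isClosed_le (by fun_prop) continuous_const

lemma eventually_forall_unit_mem_normalCone [FiniteDimensional ℝ E] {U : Set (sphere (0 : E) 1)}
    (hU : IsOpen U) (h : ∀ u : sphere (0 : E) 1, (u : E) ∈ normalCone K x → u ∈ U) :
    ∀ᶠ a in 𝓝 x, ∀ u : sphere (0 : E) 1, (u : E) ∈ normalCone K a → u ∈ U := by
  have hcompl : ∀ᶠ a in 𝓝 x, ∀ u ∈ Uᶜ, (u : E) ∉ normalCone K a := by
    refine hU.isClosed_compl.isCompact.eventually_forall_of_forall_eventually fun u hu => ?_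
    have hcont : Continuous fun z : E × sphere (0 : E) 1 => (z.1, (z.2 : E)) := by fun_prop
    exact ((isClosed_setOf_mem_normalCone K).preimage hcont).isOpen_compl.mem_nhds
      fun hmem => hu (h u hmem)
  filter_upwards [hcompl] with a ha u hu
  exact not_notMem.1 fun hmem => ha u hmem hu

lemma exists_inner_sub_eq_zero_of_mem_normalCone {U : Set (sphere (0 : E) 1)}
    (hU : IsPreconnected U) {a b : E} (ha : a ∈ K) (hb : b ∈ K) {u v : sphere (0 : E) 1}
    (hu : u ∈ U) (hv : v ∈ U) (hua : (u : E) ∈ normalCone K a) (hvb : (v : E) ∈ normalCone K b) :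
    ∃ w ∈ U, ⟪a - b, (w : E)⟫ = 0 := by
  have hcont : Continuous fun w : sphere (0 : E) 1 => ⟪a - b, (w : E)⟫ := by fun_prop
  refine hU.intermediate_value hv hu hcont.continuousOn ⟨hvb a ha, ?_⟩
  have hle := hua b hb
  rw [← neg_sub, inner_neg_left] at hle
  linarith

end Normals

section HyperplaneFamily

variable {E : Type*} [NormedAddCommGroup E] [InnerProductSpace ℝ E] {K : Set E}
  {δ : sphere (0 : E) 1 → ℝ}

lemma eventually_lt_inner_and_inner_neg_lt (hδ : Continuous δ)
    (hmeet : ∀ u : sphere (0 : E) 1, ∃ p ∈ interior K, ⟪p, (u : E)⟫ = δ u) {x : E}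
    {ν : sphere (0 : E) 1} (hν : (ν : E) ∈ normalCone K x) :
    ∀ᶠ z : E × sphere (0 : E) 1 in 𝓝 (x, ν),
      δ z.2 < ⟪z.1, (z.2 : E)⟫ ∧ ⟪z.1, ((-z.2 : sphere (0 : E) 1) : E)⟫ < δ (-z.2) := by
  have hsep : ∀ p ∈ interior K, ⟪p, (ν : E)⟫ < ⟪x, (ν : E)⟫ := fun p hp => by
    simpa [inner_sub_left] using
      inner_sub_neg_of_mem_normalCone hν (ne_zero_of_mem_unit_sphere ν) hp
  obtain ⟨p, hp, hpν⟩ := hmeet ν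
  obtain ⟨p', hp', hpν'⟩ := hmeet (-ν)
  refine ContinuousAt.eventually_lt (by fun_prop) (by fun_prop) (hpν ▸ hsep p hp) |>.and <|
    ContinuousAt.eventually_lt (by fun_prop) (by fun_prop) ?_
  rw [← hpν']
  simpa using hsep p' hp'

variable [FiniteDimensional ℝ E]

lemma exists_inner_eq_and_inner_eq (hE : 2 < Module.finrank ℝ E) (hδ : Continuous δ) {a b : E}
    {u : sphere (0 : E) 1} (hab : ⟪a - b, (u : E)⟫ = 0) (hu : δ u < ⟪b, (u : E)⟫)
    (hneg : ⟪b, ((-u : sphere (0 : E) 1) : E)⟫ < δ (-u)) :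
    ∃ v : sphere (0 : E) 1, ⟪a, (v : E)⟫ = δ v ∧ ⟪b, (v : E)⟫ = δ v := by
  have hcont : Continuous fun v : sphere (0 : E) 1 => ⟪b, (v : E)⟫ := by fun_prop
  obtain ⟨v, hv, hbv⟩ := (isPreconnected_unitSphere_inter_orthogonal hE (a - b)).intermediate_value₂
    (a := -u) (b := u) (by simpa using hab) hab hcont.continuousOn hδ.continuousOn hneg.le hu.le
  have hav : ⟪a, (v : E)⟫ - ⟪b, (v : E)⟫ = 0 := by rwa [← inner_sub_left]
  exact ⟨v, by linarith, hbv⟩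

lemma exists_nhds_forall_exists_inner_eq (hE : 2 < Module.finrank ℝ E) (hconv : Convex ℝ K)
    (hcl : IsClosed K) (hδ : Continuous δ)
    (hmeet : ∀ u : sphere (0 : E) 1, ∃ p ∈ interior K, ⟪p, (u : E)⟫ = δ u) {x : E}
    {ν : sphere (0 : E) 1} (hν : (ν : E) ∈ normalCone K x)
    (huniq : ∀ u : sphere (0 : E) 1, (u : E) ∈ normalCone K x → u = ν) :
    ∃ W ∈ 𝓝 x, ∀ a ∈ W ∩ frontier K, ∀ b ∈ W ∩ frontier K,
      ∃ v : sphere (0 : E) 1, ⟪a, (v : E)⟫ = δ v ∧ ⟪b, (v : E)⟫ = δ v := by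
  have hint : (interior K).Nonempty := (hmeet ν).imp fun p hp => hp.1
  have := locallyConnectedSpace_unitSphere (E := E) (by lia)
  obtain ⟨W₁, hW₁, N, hN, hbracket⟩ :=
    mem_nhds_prod_iff.1 (eventually_lt_inner_and_inner_neg_lt hδ hmeet hν)
  obtain ⟨U, hUN, hUo, hνU, hUc⟩ :=
    locallyConnectedSpace_iff_subsets_isOpen_isConnected.1 this ν N hN
  have hnormal := eventually_forall_unit_mem_normalCone hUo fun u hu => huniq u hu ▸ hνU
  have hexists : ∀ a ∈ frontier K, ∃ u : sphere (0 : E) 1, (u : E) ∈ normalCone K a :=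
    fun a ha => exists_unit_mem_normalCone hconv hint ha.2
  refine ⟨_, inter_mem hW₁ hnormal, fun a ha b hb => ?_⟩
  obtain ⟨u, hu⟩ := hexists a ha.2
  obtain ⟨v, hv⟩ := hexists b hb.2
  obtain ⟨w, hwU, hw⟩ := exists_inner_sub_eq_zero_of_mem_normalCone hUc.isPreconnected
    (hcl.frontier_subset ha.2) (hcl.frontier_subset hb.2) (ha.1.2 u hu) (hb.1.2 v hv) hu hv
  obtain ⟨hlt, hneg⟩ := hbracket (mk_mem_prod hb.1.1 (hUN hwU))
  exact exists_inner_eq_and_inner_eq hE hδ hw hlt hneg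

end HyperplaneFamily

section RegularSets

variable {n : ℕ} {K : Set (En n)} {x w : En n}

lemma isSupportHyperplaneAt_of_mem_normalCone (hx : x ∈ K) (hw : w ∈ normalCone K x)
    (hw0 : w ≠ 0) : IsSupportHyperplaneAt K x {y | ⟪y, w⟫ = ⟪x, w⟫} := by
  refine ⟨⟨w, _, hw0, rfl⟩, rfl, ⟨x, rfl, hx⟩, eq_empty_of_forall_notMem ?_⟩
  rintro p ⟨hpx, hp⟩
  have hneg := inner_sub_neg_of_mem_normalCone hw hw0 hp
  rw [inner_sub_left, hpx, sub_self] at hneg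
  exact hneg.false

-- The hyperplanes through `x` normal to `v` and to `u + v` both support `K` at `x`, hence
-- coincide. The second contains `x + (u - v)`, and lying on the first forces `⟪u, v⟫ = 1`.
lemma IsRegularSet.eq_of_mem_normalCone (hreg : IsRegularSet K) (hcl : IsClosed K)
    (hint : (interior K).Nonempty) (hx : x ∈ frontier K) {u v : sphere (0 : En n) 1}
    (hu : (u : En n) ∈ normalCone K x) (hv : (v : En n) ∈ normalCone K x) : u = v := by
  have hu1 := norm_eq_of_mem_sphere u
  have hv1 := norm_eq_of_mem_sphere v
  have hxK := hcl.frontier_subset hx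
  have hsum : (u + v : En n) ∈ normalCone K x := fun z hz => by
    rw [inner_add_right]
    exact add_nonpos (hu z hz) (hv z hz)
  have hsum0 : (u + v : En n) ≠ 0 := fun h => by
    obtain ⟨p, hp⟩ := hint
    have hup := inner_sub_neg_of_mem_normalCone hu (ne_zero_of_mem_unit_sphere u) hp
    have hvp := inner_sub_neg_of_mem_normalCone hv (ne_zero_of_mem_unit_sphere v) hp
    linarith [inner_add_right (𝕜 := ℝ) (p - x) u v, h ▸ inner_zero_right (𝕜 := ℝ) (p - x)]
  have hplane := (hreg x hx).unique (isSupportHyperplaneAt_of_mem_normalCone hxK hsum hsum0)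
    (isSupportHyperplaneAt_of_mem_normalCone hxK hv (ne_zero_of_mem_unit_sphere v))
  have hmem : x + (u - v : En n) ∈ {y | ⟪y, (u + v : En n)⟫ = ⟪x, (u + v : En n)⟫} := by
    change ⟪x + (u - v : En n), (u + v : En n)⟫ = ⟪x, (u + v : En n)⟫
    rw [inner_add_left, add_eq_left, real_inner_comm, real_inner_add_sub_eq_zero_iff, hu1, hv1]
  rw [hplane] at hmem
  have hinner : ⟪(u : En n), v⟫ = 1 := by
    have heq : ⟪x + (u - v : En n), (v : En n)⟫ = ⟪x, (v : En n)⟫ := hmem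
    rwa [inner_add_left, add_eq_left, inner_sub_left, real_inner_self_eq_norm_sq, hv1, one_pow,
      sub_eq_zero] at heq
  exact Subtype.ext ((inner_eq_one_iff_of_norm_eq_one hu1 hv1).1 hinner)

lemma IsRegularSet.exists_nhds_forall_exists_mem_sphHyp (hreg : IsRegularSet K) (hn : 3 ≤ n)
    (hconv : Convex ℝ K) (hcl : IsClosed K) (hint : (interior K).Nonempty)
    {δ : sphere (0 : En n) 1 → ℝ} (hδ : Continuous δ)
    (hmeet : ∀ u, (sphHyp δ u ∩ interior K).Nonempty) (hx : x ∈ frontier K) :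
    ∃ W ∈ 𝓝 x, ∀ a ∈ W ∩ frontier K, ∀ b ∈ W ∩ frontier K,
      ∃ u, a ∈ sphHyp δ u ∧ b ∈ sphHyp δ u := by
  obtain ⟨ν, hν⟩ := exists_unit_mem_normalCone hconv hint hx.2
  exact exists_nhds_forall_exists_inner_eq (by rwa [finrank_euclideanSpace_fin]) hconv hcl hδ
    (fun u => (hmeet u).imp fun p hp => hp.symm) hν
    fun u hu => hreg.eq_of_mem_normalCone hcl hint hx hu hν

end RegularSets

/-- Lemma 9: under the hypotheses of Theorem 2 with K strictly convex and
regular, if the frontier of K contains a nonempty relatively open piece of a real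
quadric surface, then the frontier of K is a convex quadric. -/
theorem frontier_convex_quadric_of_open_quadric_piece
    {n : ℕ} (hn : 3 ≤ n) (K : Set (En n)) (hKconv : Convex ℝ K) (hKcl : IsClosed K)
    (hKint : (interior K).Nonempty) (hKne : K ≠ Set.univ)
    (hKsc : IsStrictlyConvexSet K) (hKreg : IsRegularSet K)
    (δ : sphere (0 : En n) 1 → ℝ) (hδ : Continuous δ)
    (hsec : ∀ u : sphere (0 : En n) 1,
      IsConvexQuadricIn (sphHyp δ u) (frontier K ∩ sphHyp δ u))
    (hpiece : ∃ (Q A : Set (En n)), IsRealQuadricSurface Q ∧ A.Nonempty ∧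
      A ⊆ frontier K ∩ Q ∧ ∃ V : Set (En n), IsOpen V ∧ A = V ∩ frontier K) :
    IsConvexQuadric (frontier K) := by
  obtain ⟨Q, _, hQ, hA, hAQ, V, hV, rfl⟩ := hpiece
  obtain ⟨a₀, ha₀V, ha₀K⟩ := hA
  have hsc : StrictConvex ℝ K := hKsc.strictConvex hKconv hKcl
  obtain ⟨q, hq, -, rfl⟩ := hQ.1.exists_isQuadraticFun
  have hmeet : ∀ u, (sphHyp δ u ∩ interior K).Nonempty :=
    fun u => (hsec u).inter_interior_nonempty hn hsc hKcl
  have hpre : IsPreconnected (frontier K) :=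
    isPreconnected_frontier_of_strictConvex (one_lt_rank_En (by lia)) hsc hKcl hKint
  refine isConvexQuadric_frontier_of_subset (by lia) hsc hKcl hKint hKne hQ
    (forall_mem_of_isPreconnected_of_eventually (p := fun z => q z = 0) hpre ?_ ha₀K ?_)
  · intro x hx
    obtain ⟨W, hW, hcommon⟩ :=
      hKreg.exists_nhds_forall_exists_mem_sphHyp hn hKconv hKcl hKint hδ hmeet hx
    refine ⟨W, hW, fun a ha hqa y hy => ?_⟩
    obtain ⟨u, hau, hyu⟩ := hcommon a ha y hy
    exact (hsec u).eq_zero_of_eventually_eq_zero hn hsc hKcl hq ⟨ha.2, hau⟩ hqa ⟨hy.2, hyu⟩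
  · filter_upwards [inter_mem_nhdsWithin (frontier K) (hV.mem_nhds ha₀V)] with z hz
    exact (hAQ hz.symm).2
end
end

section
/- Let n ≥ 3 and let K ⊆ ℝⁿ be a closed convex set with nonempty interior, K ≠ ℝⁿ, that is strictly convex and regular. Let δ : S^{n−1} → ℝ be continuous, H(u) = {x ∈ ℝⁿ : ⟨x, u⟩ = δ(u)}, and assume that for every u ∈ S^{n−1} the set frontier K ∩ H(u) is an (n−1)-dimensional convex quadric in H(u). Then frontier K contains an open piece of a quadric surface: there exist a real quadric surface Q ⊆ ℝⁿ and a nonempty set A ⊆ frontier K ∩ Q that is open in the subspace topology of frontier K. -/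
open Set Metric RealInnerProductSpace

noncomputable section

/-!
By strict convexity a supporting hyperplane touches `K` in a single point, so all hyperplanes with
normals near that of a supporting one cut `K` in bounded slices. An equation of a bounded slice is
unique up to a positive factor, because on each line through an interior point both of its roots
are known.

Take three such hyperplanes with linearly independent normals that pairwise meet inside `K`. Scale
the equations of the second and third slices to agree with the first where they meet it; at the
common point of the three hyperplanes they then also agree with each other, either because their
common value there is nonzero or, if the point lies on the frontier, because their derivatives along
the slices are multiples of one supporting functional. Hence the three equations are restrictions of
one quadratic function `Q`. On a nearby fourth hyperplane `H`, the difference of `Q` and a suitably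
scaled equation of the slice vanishes on three hyperplanes of `H`; being quadratic it vanishes on
`H`. As the hyperplanes near the fourth one sweep out an open set meeting the frontier, `Q` vanishes
on a relatively open piece of the frontier.
-/

section Quadratic

variable {E F : Type*} [AddCommGroup E] [Module ℝ E] [AddCommGroup F] [Module ℝ F]

/-- A real function on a vector space that is polynomial of degree at most two, encoded as a
bilinear form on the diagonal plus a linear functional plus a constant. The bilinear form is not
required to be symmetric or nonzero. -/
def IsQuadratic (q : E → ℝ) : Prop :=
  ∃ (B : E →ₗ[ℝ] E →ₗ[ℝ] ℝ) (l : E →ₗ[ℝ] ℝ) (c : ℝ), ∀ x, q x = B x x + l x + c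

namespace IsQuadratic

variable {p q : E → ℝ}

theorem add (hp : IsQuadratic p) (hq : IsQuadratic q) : IsQuadratic fun x => p x + q x := by
  obtain ⟨B, l, c, hp⟩ := hp
  obtain ⟨B', l', c', hq⟩ := hq
  refine ⟨B + B', l + l', c + c', fun x => ?_⟩
  simp only [hp, hq, LinearMap.add_apply]
  ring

theorem const_mul (hq : IsQuadratic q) (r : ℝ) : IsQuadratic fun x => r * q x := by
  obtain ⟨B, l, c, hq⟩ := hq
  refine ⟨r • B, r • l, r * c, fun x => ?_⟩
  simp only [hq, LinearMap.smul_apply, smul_eq_mul]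
  ring

theorem sub (hp : IsQuadratic p) (hq : IsQuadratic q) : IsQuadratic fun x => p x - q x := by
  simpa only [neg_one_mul, ← sub_eq_add_neg] using hp.add (hq.const_mul (-1))

theorem comp_affineMap (hq : IsQuadratic q) (f : F →ᵃ[ℝ] E) : IsQuadratic fun x => q (f x) := by
  obtain ⟨B, l, c, hq⟩ := hq
  refine ⟨B.compl₁₂ f.linear f.linear,
    (B.flip (f 0) + B (f 0) + l) ∘ₗ f.linear, B (f 0) (f 0) + l (f 0) + c, fun x => ?_⟩
  have hf : f x = f.linear x + f 0 := congrFun f.decomp x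
  simp only [hq, hf, map_add, LinearMap.add_apply, LinearMap.compl₁₂_apply, LinearMap.comp_apply,
    LinearMap.flip_apply]
  ring

theorem exists_lineDeriv (hq : IsQuadratic q) (z : E) :
    ∃ d : E →ₗ[ℝ] ℝ, ∀ w, HasLineDerivAt ℝ q (d w) z w ∧
      ∀ t : ℝ, q (z + t • w) = q z + t * d w + t ^ 2 * (q (z + w) - q z - d w) := by
  obtain ⟨B, l, c, hq⟩ := hq
  refine ⟨B.flip z + B z + l, fun w => ?_⟩
  have expansion : ∀ t : ℝ, q (z + t • w) =
      q z + t * (B.flip z + B z + l) w + t ^ 2 * B w w := fun t => by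
    simp only [hq, map_add, map_smul, LinearMap.add_apply, LinearMap.smul_apply, smul_eq_mul,
      LinearMap.flip_apply]
    ring
  have remainder : q (z + w) - q z - (B.flip z + B z + l) w = B w w := by
    linear_combination (by simpa using expansion 1 :
      q (z + w) = q z + (B.flip z + B z + l) w + B w w)
  refine ⟨?_, fun t => by rw [remainder, expansion]⟩
  have hasDeriv : HasDerivAt (fun t : ℝ => q z + t * (B.flip z + B z + l) w + t ^ 2 * B w w)
      (0 + 1 * (B.flip z + B z + l) w + 2 * (0 : ℝ) ^ (2 - 1) * 1 * B w w) 0 :=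
    ((hasDerivAt_const _ _).add ((hasDerivAt_id' 0).mul_const _)).add
      (((hasDerivAt_id' 0).pow 2).mul_const _)
  simpa only [HasLineDerivAt, expansion, zero_add, one_mul, mul_one, Nat.add_one_sub_one, pow_one,
    mul_zero, zero_mul, add_zero] using hasDeriv

theorem apply_lineMap_eq_of_roots (hq : IsQuadratic q) {x y : E} {a b : ℝ} (ha : a ≠ 0)
    (hb : b ≠ 0) (hab : a ≠ b) (hqa : q (AffineMap.lineMap y x a) = 0)
    (hqb : q (AffineMap.lineMap y x b) = 0) (t : ℝ) :
    q (AffineMap.lineMap y x t) = q y * ((1 - t / a) * (1 - t / b)) := by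
  obtain ⟨d, hd⟩ := hq.exists_lineDeriv y
  have expansion : ∀ t, q (AffineMap.lineMap y x t) =
      q y + t * d (x - y) + t ^ 2 * (q (y + (x - y)) - q y - d (x - y)) := fun t => by
    rw [AffineMap.lineMap_apply_module', add_comm, (hd _).2]
  generalize d (x - y) = β, q (y + (x - y)) - q y - d (x - y) = α at expansion
  rw [expansion] at hqa hqb
  have hβ : β = -(a + b) * α :=
    mul_left_cancel₀ (sub_ne_zero.2 hab) (by linear_combination hqa - hqb)
  have hγ : q y = a * b * α := by linear_combination hqa - a * hβ
  rw [expansion, hβ, hγ]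
  field

theorem exists_mixed_difference (hq : IsQuadratic q) (v w : E) :
    ∃ m : ℝ, ∀ (x : E) (s t : ℝ),
      q (x + s • v + t • w) = q (x + s • v) + q (x + t • w) - q x + s * t * m := by
  obtain ⟨B, l, c, hq⟩ := hq
  refine ⟨B v w + B w v, fun x s t => ?_⟩
  simp only [hq, map_add, map_smul, LinearMap.add_apply, LinearMap.smul_apply, smul_eq_mul]
  ring

protected theorem continuous {E : Type*} [NormedAddCommGroup E] [NormedSpace ℝ E]
    [FiniteDimensional ℝ E] {q : E → ℝ} (hq : IsQuadratic q) : Continuous q := by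
  obtain ⟨B, l, c, hq⟩ := hq
  have hB : Continuous fun x => B x x :=
    B.toContinuousBilinearMap.continuous₂.comp (continuous_id.prodMk continuous_id)
  exact ((hB.add l.continuous_of_finiteDimensional).add continuous_const).congr
    fun x => (hq x).symm

end IsQuadratic

end Quadratic

section SliceEquations

theorem inter_frontier_nonempty_of_isPreconnected {X : Type*} [TopologicalSpace X] {s K : Set X}
    (hs : IsPreconnected s) (hsK : (s ∩ K).Nonempty) (hsK' : (s ∩ Kᶜ).Nonempty) :
    (s ∩ frontier K).Nonempty := by
  by_contra! hdisj
  have hcover : s ⊆ interior K ∪ (closure K)ᶜ := fun x hx => by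
    by_contra! hx'
    rw [mem_union, not_or, notMem_compl_iff] at hx'
    exact notMem_empty x (hdisj ▸ ⟨hx, hx'.2, hx'.1⟩)
  obtain ⟨x, hxs, hxK⟩ := hsK
  obtain ⟨x', hxs', hxK'⟩ := hsK'
  obtain ⟨w, -, hw, hw'⟩ := hs _ _ isOpen_interior isClosed_closure.isOpen_compl hcover
    ⟨x, hxs, (hcover hxs).resolve_right fun h => h (subset_closure hxK)⟩
    ⟨x', hxs', (hcover hxs').resolve_left fun h => hxK' (interior_subset h)⟩
  exact hw' (interior_subset_closure hw)

variable {E : Type*} [NormedAddCommGroup E] [NormedSpace ℝ E]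
variable {K : Set E} {H H' : AffineSubspace ℝ E} {x y z : E}

theorem exists_pos_lineMap_mem_frontier (hb : Bornology.IsBounded (K ∩ H)) (hyK : y ∈ interior K)
    (hy : y ∈ H) (hx : x ∈ H) (hxy : x ≠ y) :
    ∃ b > 0, AffineMap.lineMap y x (b : ℝ) ∈ frontier K := by
  obtain ⟨R, hR⟩ := hb.subset_closedBall y
  have hdist : 0 < dist y x := dist_pos.2 hxy.symm
  have hfar : AffineMap.lineMap y x ((|R| + 1) / dist y x) ∉ K := fun hK => by
    have hle := hR ⟨hK, AffineMap.lineMap_mem _ hy hx⟩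
    rw [mem_closedBall, dist_lineMap_left, Real.norm_of_nonneg (by positivity),
      div_mul_cancel₀ _ hdist.ne'] at hle
    linarith [le_abs_self R]
  obtain ⟨_, ⟨b, hb, rfl⟩, hbK⟩ := inter_frontier_nonempty_of_isPreconnected
    (isPreconnected_Ici.image (AffineMap.lineMap y x) AffineMap.lineMap_continuous.continuousOn)
    ⟨y, ⟨(0 : ℝ), self_mem_Ici, AffineMap.lineMap_apply_zero y x⟩, interior_subset hyK⟩
    ⟨_, ⟨(|R| + 1) / dist y x, by rw [mem_Ici]; positivity, rfl⟩, hfar⟩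
  refine ⟨b, lt_of_le_of_ne hb ?_, hbK⟩
  rintro rfl
  exact hbK.2 (by rwa [AffineMap.lineMap_apply_zero])

theorem exists_neg_pos_lineMap_mem_frontier (hb : Bornology.IsBounded (K ∩ H))
    (hyK : y ∈ interior K) (hy : y ∈ H) (hx : x ∈ H) (hxy : x ≠ y) :
    ∃ a < 0, ∃ b > 0,
      AffineMap.lineMap y x (a : ℝ) ∈ frontier K ∧ AffineMap.lineMap y x (b : ℝ) ∈ frontier K := by
  obtain ⟨b, hb0, hbK⟩ := exists_pos_lineMap_mem_frontier hb hyK hy hx hxy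
  have hreflect : AffineMap.lineMap y x (-1 : ℝ) ≠ y := by
    simpa [AffineMap.lineMap_apply_module', sub_eq_zero] using hxy.symm
  obtain ⟨a, ha0, haK⟩ := exists_pos_lineMap_mem_frontier hb hyK hy
    (AffineMap.lineMap_mem (-1) hy hx) hreflect
  rw [AffineMap.lineMap_lineMap_right, mul_neg_one] at haK
  exact ⟨-a, neg_neg_of_pos ha0, b, hb0, haK, hbK⟩

/-- `q` is a quadratic equation of the slice of `K` by the affine subspace `H`: it vanishes on the
frontier of `K` and is negative in its interior, as far as these lie in `H`. The slice is required
to be bounded, so that every line of `H` through an interior point of `K` leaves `K` twice. -/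
structure IsSliceEquation (K : Set E) (H : AffineSubspace ℝ E) (q : E → ℝ) : Prop where
  isQuadratic : IsQuadratic q
  isBounded : Bornology.IsBounded (K ∩ H)
  eq_zero : ∀ x ∈ H, x ∈ frontier K → q x = 0
  neg : ∀ x ∈ H, x ∈ interior K → q x < 0

/-- Two affine subspaces have a common point in the interior of `K`, so that equations of their
slices are proportional on the intersection. -/
def MeetInside (K : Set E) (H H' : AffineSubspace ℝ E) : Prop :=
  ∃ y ∈ interior K, y ∈ H ⊓ H'

theorem MeetInside.symm (h : MeetInside K H H') : MeetInside K H' H :=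
  let ⟨y, hyK, hy⟩ := h
  ⟨y, hyK, hy.2, hy.1⟩

namespace IsSliceEquation

variable {p q : E → ℝ}

theorem mono (h : IsSliceEquation K H q) (hle : H' ≤ H) : IsSliceEquation K H' q where
  isQuadratic := h.isQuadratic
  isBounded := h.isBounded.subset (inter_subset_inter_right K hle)
  eq_zero x hx := h.eq_zero x (hle hx)
  neg x hx := h.neg x (hle hx)

theorem const_mul (h : IsSliceEquation K H q) {r : ℝ} (hr : 0 < r) :
    IsSliceEquation K H fun x => r * q x where
  isQuadratic := h.isQuadratic.const_mul r
  isBounded := h.isBounded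
  eq_zero x hx hxK := mul_eq_zero_of_right r (h.eq_zero x hx hxK)
  neg x hx hxK := mul_neg_of_pos_of_neg hr (h.neg x hx hxK)

theorem congr (h : IsSliceEquation K H q) (hp : IsQuadratic p) (hpq : EqOn p q H) :
    IsSliceEquation K H p where
  isQuadratic := hp
  isBounded := h.isBounded
  eq_zero x hx hxK := by rw [hpq hx, h.eq_zero x hx hxK]
  neg x hx hxK := by rw [hpq hx]; exact h.neg x hx hxK

theorem exists_apply_eq (h : IsSliceEquation K H q) (hyK : y ∈ interior K) (hy : y ∈ H)
    (hx : x ∈ H) (hxy : x ≠ y) :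
    ∃ a < 0, ∃ b > 0, AffineMap.lineMap y x (b : ℝ) ∈ frontier K ∧
      ∀ p, IsSliceEquation K H p → p x = p y * ((1 - 1 / a) * (1 - 1 / b)) := by
  obtain ⟨a, ha, b, hb, haK, hbK⟩ :=
    exists_neg_pos_lineMap_mem_frontier h.isBounded hyK hy hx hxy
  refine ⟨a, ha, b, hb, hbK, fun p hp => ?_⟩
  have happly := hp.isQuadratic.apply_lineMap_eq_of_roots ha.ne hb.ne' (ha.trans hb).ne
    (hp.eq_zero _ (AffineMap.lineMap_mem a hy hx) haK)
    (hp.eq_zero _ (AffineMap.lineMap_mem b hy hx) hbK) 1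
  rwa [AffineMap.lineMap_apply_one] at happly

theorem mem_interior_of_neg (hK : Convex ℝ K) (h : IsSliceEquation K H q) (hyK : y ∈ interior K)
    (hy : y ∈ H) (hx : x ∈ H) (hqx : q x < 0) : x ∈ interior K := by
  obtain rfl | hxy := eq_or_ne x y
  · exact hyK
  obtain ⟨a, ha, b, hb, hbK, happly⟩ := h.exists_apply_eq hyK hy hx hxy
  have ha' : 0 < 1 - 1 / a := by linarith [one_div_neg.2 ha]
  have hb' : 0 < (1 - 1 / a) * (1 - 1 / b) :=
    pos_of_mul_neg_right (happly q h ▸ hqx) (h.neg y hy hyK).le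
  have hb1 : 1 / b < 1 := by linarith [pos_of_mul_pos_right hb' ha'.le]
  have hx_eq : AffineMap.lineMap y (AffineMap.lineMap y x b) (1 / b) = x := by
    rw [AffineMap.lineMap_lineMap_right, one_div_mul_cancel hb.ne', AffineMap.lineMap_apply_one]
  refine hK.openSegment_interior_closure_subset_interior hyK (frontier_subset_closure hbK) ?_
  have hmem := lineMap_mem_openSegment ℝ y (AffineMap.lineMap y x b) ⟨one_div_pos.2 hb, hb1⟩
  rwa [hx_eq] at hmem

theorem mem_frontier_of_eq_zero (h : IsSliceEquation K H q) (hyK : y ∈ interior K) (hy : y ∈ H)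
    (hx : x ∈ H) (hqx : q x = 0) : x ∈ frontier K := by
  have hqy := (h.neg y hy hyK).ne
  have hxy : x ≠ y := by rintro rfl; exact hqy hqx
  obtain ⟨a, ha, b, hb, hbK, happly⟩ := h.exists_apply_eq hyK hy hx hxy
  have ha' : 1 - 1 / a ≠ 0 := by linarith [one_div_neg.2 ha]
  have hb1 : b = 1 := by
    have := happly q h
    rw [hqx, zero_eq_mul, or_iff_right hqy, mul_eq_zero, or_iff_right ha', sub_eq_zero,
      eq_div_iff hb.ne', one_mul] at this
    exact this
  rwa [hb1, AffineMap.lineMap_apply_one] at hbK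

theorem exists_eqOn_const_mul (hp : IsSliceEquation K H p) (hq : IsSliceEquation K H q)
    (hyK : y ∈ interior K) (hy : y ∈ H) : ∃ r > 0, EqOn p (fun x => r * q x) H := by
  have hqy := hq.neg y hy hyK
  refine ⟨p y / q y, div_pos_of_neg_of_neg (hp.neg y hy hyK) hqy, fun x hx => ?_⟩
  obtain rfl | hxy := eq_or_ne x y
  · exact (div_mul_cancel₀ _ hqy.ne).symm
  obtain ⟨a, -, b, -, -, happly⟩ := hp.exists_apply_eq hyK hy hx hxy
  simp only [happly p hp, happly q hq, ← mul_assoc, div_mul_cancel₀ _ hqy.ne]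

-- Since `q` is nonnegative on the part of `H` where `f ≥ f z`, its derivative at `z` along `H`
-- vanishes on the kernel of `f`.
theorem exists_hasLineDerivAt_eq_mul (hK : Convex ℝ K) (h : IsSliceEquation K H q)
    (hyK : y ∈ interior K) (hy : y ∈ H) (hz : z ∈ H) (hzK : z ∈ frontier K) {f : E →L[ℝ] ℝ}
    (hf : ∀ x ∈ interior K, f x < f z) :
    ∃ m ≠ 0, ∀ w ∈ H.direction, HasLineDerivAt ℝ q (m * f w) z w := by
  obtain ⟨d, hd⟩ := h.isQuadratic.exists_lineDeriv z
  have hqz : q z = 0 := h.eq_zero z hz hzK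
  have nonneg : ∀ w ∈ H.direction, 0 ≤ f w → 0 ≤ q (z + w) := fun w hw hfw => by
    by_contra! hneg
    have := hf _ (h.mem_interior_of_neg hK hyK hy
      (add_comm w z ▸ AffineSubspace.vadd_mem_of_mem_direction hw hz) hneg)
    rw [map_add] at this
    linarith
  have d_eq_zero : ∀ w ∈ H.direction, f w = 0 → d w = 0 := fun w hw hfw => by
    refine IsLocalMin.hasDerivAt_eq_zero (Filter.Eventually.of_forall fun t => ?_) (hd w).1
    simpa [hqz] using nonneg (t • w) (H.direction.smul_mem t hw) (by simp [hfw])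
  have hdir : y - z ∈ H.direction := AffineSubspace.vsub_mem_direction hy hz
  have hfy : f (y - z) < 0 := by rw [map_sub]; linarith [hf y hyK]
  have hdy : d (y - z) ≠ 0 := fun hd0 => by
    have hback : q (z + (-1 : ℝ) • (y - z)) = q y := by
      rw [(hd _).2, hqz, hd0, add_sub_cancel]; ring
    have := nonneg _ (H.direction.smul_mem (-1) hdir) (by simpa using hfy.le)
    linarith [h.neg y hy hyK]
  refine ⟨d (y - z) / f (y - z), div_ne_zero hdy hfy.ne, fun w hw => ?_⟩
  have hker := d_eq_zero (w - (f w / f (y - z)) • (y - z))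
    (H.direction.sub_mem hw (H.direction.smul_mem _ hdir))
    (by rw [map_sub, map_smul, smul_eq_mul, div_mul_cancel₀ _ hfy.ne, sub_self])
  rw [map_sub, map_smul, smul_eq_mul, sub_eq_zero] at hker
  convert (hd w).1 using 1
  rw [hker]
  ring

end IsSliceEquation

theorem slope_eq_mul_slope {p q : E → ℝ} {f : E →L[ℝ] ℝ} {r m m' : ℝ}
    (hz : z ∈ H ⊓ H') (hf : ∀ x ∈ interior K, f x < f z) (hmeet : MeetInside K H H')
    (hpq : EqOn p (fun x => r * q x) (H ⊓ H' : AffineSubspace ℝ E))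
    (hp : ∀ w ∈ H.direction, HasLineDerivAt ℝ p (m * f w) z w)
    (hq : ∀ w ∈ H'.direction, HasLineDerivAt ℝ q (m' * f w) z w) : m = r * m' := by
  obtain ⟨y, hyK, hy⟩ := hmeet
  have hfy : f (y - z) ≠ 0 := by rw [map_sub]; exact (sub_neg.2 (hf y hyK)).ne
  have hline : ∀ t : ℝ, z + t • (y - z) ∈ H ⊓ H' := fun t => by
    simpa [AffineMap.lineMap_apply_module', add_comm] using AffineMap.lineMap_mem t hz hy
  have hderiv : HasLineDerivAt ℝ p (r * (m' * f (y - z))) z (y - z) := by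
    simpa only [HasLineDerivAt, hpq (hline _)] using HasDerivAt.const_mul r (hq (y - z)
      (AffineSubspace.vsub_mem_direction hy.2 hz.2))
  refine mul_right_cancel₀ hfy ?_
  rw [(hp (y - z) (AffineSubspace.vsub_mem_direction hy.1 hz.1)).unique hderiv, mul_assoc]

theorem IsSliceEquation.eqOn_inf_of_eqOn_inf (hK : Convex ℝ K)
    {H₁ H₂ H₃ : AffineSubspace ℝ E} {q₁ q₂ q₃ : E → ℝ} (h₁ : IsSliceEquation K H₁ q₁)
    (h₂ : IsSliceEquation K H₂ q₂) (h₃ : IsSliceEquation K H₃ q₃)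
    (hz : z ∈ H₁ ⊓ H₂ ⊓ H₃) (meet₁₂ : MeetInside K H₁ H₂) (meet₁₃ : MeetInside K H₁ H₃)
    (meet₂₃ : MeetInside K H₂ H₃) (eq₁₂ : EqOn q₁ q₂ (H₁ ⊓ H₂ : AffineSubspace ℝ E))
    (eq₁₃ : EqOn q₁ q₃ (H₁ ⊓ H₃ : AffineSubspace ℝ E)) :
    EqOn q₂ q₃ (H₂ ⊓ H₃ : AffineSubspace ℝ E) := by
  obtain ⟨⟨hz₁, hz₂⟩, hz₃⟩ := hz
  obtain ⟨y, hyK, hy₂, hy₃⟩ := id meet₂₃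
  obtain ⟨r, -, hr⟩ := (h₂.mono inf_le_left).exists_eqOn_const_mul (h₃.mono inf_le_right) hyK
    ⟨hy₂, hy₃⟩
  suffices r = 1 by simpa only [this, one_mul] using hr
  by_cases hzK : z ∈ frontier K
  · obtain ⟨f, hf⟩ := geometric_hahn_banach_open_point hK.interior isOpen_interior hzK.2
    obtain ⟨y₁, hyK₁, hy₁, -⟩ := id meet₁₂
    obtain ⟨m₁, -, hm₁⟩ := h₁.exists_hasLineDerivAt_eq_mul hK hyK₁ hy₁ hz₁ hzK hf
    obtain ⟨m₂, -, hm₂⟩ := h₂.exists_hasLineDerivAt_eq_mul hK hyK hy₂ hz₂ hzK hf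
    obtain ⟨m₃, hm₃_ne, hm₃⟩ := h₃.exists_hasLineDerivAt_eq_mul hK hyK hy₃ hz₃ hzK hf
    have m₁_eq_m₂ := slope_eq_mul_slope (r := 1) ⟨hz₁, hz₂⟩ hf meet₁₂ (by simpa using eq₁₂) hm₁ hm₂
    have m₁_eq_m₃ := slope_eq_mul_slope (r := 1) ⟨hz₁, hz₃⟩ hf meet₁₃ (by simpa using eq₁₃) hm₁ hm₃
    have m₂_eq_m₃ := slope_eq_mul_slope ⟨hz₂, hz₃⟩ hf meet₂₃ hr hm₂ hm₃
    exact mul_right_cancel₀ hm₃_ne (by linear_combination m₁_eq_m₃ - m₁_eq_m₂ - m₂_eq_m₃)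
  · have hq₃ : q₃ z ≠ 0 := fun h => hzK (h₃.mem_frontier_of_eq_zero hyK hy₃ hz₃ h)
    refine mul_right_cancel₀ hq₃ ?_
    calc r * q₃ z = q₂ z := (hr ⟨hz₂, hz₃⟩).symm
      _ = q₁ z := (eq₁₂ ⟨hz₁, hz₂⟩).symm
      _ = 1 * q₃ z := by rw [one_mul, eq₁₃ ⟨hz₁, hz₃⟩]

end SliceEquations

section Hyperplanes

variable {E : Type*} [NormedAddCommGroup E] [InnerProductSpace ℝ E]

/-- The affine subspace `{x | ⟪x, u⟫ = c}`, which is a hyperplane as soon as `u ≠ 0`. -/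
def hyperplane (u : E) (c : ℝ) : AffineSubspace ℝ E where
  carrier := {x | ⟪x, u⟫ = c}
  smul_vsub_vadd_mem' t x y z hx hy hz := by
    simp only [mem_ofPred_eq, vsub_eq_sub, vadd_eq_add, inner_add_left, real_inner_smul_left,
      inner_sub_left] at *
    rw [hx, hy, hz, sub_self, mul_zero, zero_add]

theorem mem_hyperplane {u x : E} {c : ℝ} : x ∈ hyperplane u c ↔ ⟪x, u⟫ = c :=
  Iff.rfl

theorem exists_inner_eq_of_linearIndependent {ι : Type*} [Finite ι] {u : ι → E}
    (hu : LinearIndependent ℝ u) (c : ι → ℝ) : ∃ w, ∀ i, ⟪w, u i⟫ = c i := by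
  have := FiniteDimensional.span_of_finite ℝ (finite_range u)
  let b := Module.Basis.span hu
  let w := (InnerProductSpace.toDual ℝ _).symm (b.constr ℝ c).toContinuousLinearMap
  refine ⟨w, fun i => ?_⟩
  calc ⟪(w : E), u i⟫ = ⟪w, b i⟫ := by
        rw [Submodule.coe_inner, Module.Basis.span_apply]
    _ = b.constr ℝ c (b i) := by
        rw [InnerProductSpace.toDual_symm_apply, LinearMap.coe_toContinuousLinearMap']
    _ = c i := b.constr_basis ℝ c i

/-- The affine map moving points parallel to `w`; for `⟪w, u⟫ = 1` it is the projection onto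
`hyperplane u c`, used to extend functions from that hyperplane. -/
def hyperplaneProjection (u w : E) (c : ℝ) : E →ᵃ[ℝ] E :=
  (LinearMap.id - (innerₗ E u).smulRight w).toAffineMap + AffineMap.const ℝ E (c • w)

theorem hyperplaneProjection_apply (u w : E) (c : ℝ) (x : E) :
    hyperplaneProjection u w c x = x - (⟪x, u⟫ - c) • w := by
  simp only [hyperplaneProjection, AffineMap.coe_add, LinearMap.coe_toAffineMap,
    AffineMap.coe_const, Pi.add_apply, LinearMap.sub_apply, LinearMap.id_coe, id_eq,
    LinearMap.coe_smulRight, innerₗ_apply_apply, Function.const_apply, real_inner_comm, sub_smul]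
  abel

theorem exists_quadratic_eqOn_hyperplane {ι : Type*} [Finite ι] {u : ι → E}
    (hu : LinearIndependent ℝ u) (c : ι → ℝ) {q : ι → E → ℝ} (hq : ∀ i, IsQuadratic (q i))
    (heq : ∀ i j, EqOn (q i) (q j)
      (hyperplane (u i) (c i) ⊓ hyperplane (u j) (c j) : AffineSubspace ℝ E)) :
    ∃ Q, IsQuadratic Q ∧ ∀ i, EqOn Q (q i) (hyperplane (u i) (c i)) := by
  classical
  have := Fintype.ofFinite ι
  suffices ∀ s : Finset ι, ∃ Q, IsQuadratic Q ∧ ∀ i ∈ s, EqOn Q (q i) (hyperplane (u i) (c i)) by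
    simpa using this Finset.univ
  intro s
  induction s using Finset.induction_on with
  | empty => exact ⟨fun _ => 0, ⟨0, 0, 0, by simp⟩, by simp⟩
  | insert a s has ih =>
    obtain ⟨Q, hQ, hQq⟩ := ih
    obtain ⟨w, hw⟩ := exists_inner_eq_of_linearIndependent hu (Pi.single a 1)
    let π := hyperplaneProjection (u a) w (c a)
    refine ⟨fun x => Q x + (q a (π x) - Q (π x)),
      hQ.add (((hq a).comp_affineMap π).sub (hQ.comp_affineMap π)), ?_⟩
    rw [Finset.forall_mem_insert]
    constructor
    · intro x hx
      have hπ : π x = x := by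
        rw [hyperplaneProjection_apply, mem_hyperplane.1 hx, sub_self, zero_smul, sub_zero]
      simp [hπ]
    · intro i hi x hx
      have hne : i ≠ a := fun h => has (h ▸ hi)
      have hπi : π x ∈ hyperplane (u i) (c i) := by
        rw [mem_hyperplane, hyperplaneProjection_apply, inner_sub_left, real_inner_smul_left, hw,
          Pi.single_eq_of_ne hne, mul_zero, sub_zero, mem_hyperplane.1 hx]
      have hπa : π x ∈ hyperplane (u a) (c a) := by
        rw [mem_hyperplane, hyperplaneProjection_apply, inner_sub_left, real_inner_smul_left, hw,
          Pi.single_eq_same, mul_one, sub_sub_cancel]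
      simp [hQq i hi hx, hQq i hi hπi, heq a i ⟨hπa, hπi⟩]

theorem exists_eq_mul_of_eqOn_zero {v u₁ u₂ : E} {c₁ c₂ e : ℝ} {g : E → ℝ} (hg : IsQuadratic g)
    (hli : LinearIndependent ℝ ![v, u₁, u₂])
    (hg₁ : EqOn g 0 (hyperplane v e ⊓ hyperplane u₁ c₁ : AffineSubspace ℝ E))
    (hg₂ : EqOn g 0 (hyperplane v e ⊓ hyperplane u₂ c₂ : AffineSubspace ℝ E)) :
    ∃ m, ∀ x ∈ hyperplane v e, g x = m * ((⟪x, u₁⟫ - c₁) * (⟪x, u₂⟫ - c₂)) := by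
  obtain ⟨w₁, hw₁⟩ := exists_inner_eq_of_linearIndependent hli ![0, 1, 0]
  obtain ⟨w₂, hw₂⟩ := exists_inner_eq_of_linearIndependent hli ![0, 0, 1]
  simp only [Fin.forall_fin_succ, Fin.forall_fin_zero, Matrix.cons_val_zero, Matrix.cons_val_succ,
    and_true] at hw₁ hw₂
  obtain ⟨m, hm⟩ := hg.exists_mixed_difference w₁ w₂
  refine ⟨m, fun x hx => ?_⟩
  have hm := hm x (c₁ - ⟪x, u₁⟫) (c₂ - ⟪x, u₂⟫)
  rw [hg₁ ⟨?_, ?_⟩, hg₁ ⟨?_, ?_⟩, hg₂ ⟨?_, ?_⟩] at hm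
  · simp only [Pi.zero_apply] at hm
    linear_combination hm
  all_goals simp [mem_hyperplane, inner_add_left, real_inner_smul_left, hw₁, hw₂,
    mem_hyperplane.1 hx]

theorem eqOn_zero_of_eqOn_zero_inf {v : E} {u : Fin 3 → E} {e : ℝ} {c : Fin 3 → ℝ} {g : E → ℝ}
    (hg : IsQuadratic g) (hli : ∀ i j, i ≠ j → LinearIndependent ℝ ![v, u i, u j])
    (hgu : ∀ i, EqOn g 0 (hyperplane v e ⊓ hyperplane (u i) (c i) : AffineSubspace ℝ E)) :
    EqOn g 0 (hyperplane v e) := by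
  obtain ⟨m, hm⟩ := exists_eq_mul_of_eqOn_zero hg (hli 0 1 (by decide)) (hgu 0) (hgu 1)
  suffices m = 0 from fun x hx => by rw [hm x hx, this, zero_mul, Pi.zero_apply]
  obtain ⟨x, hx⟩ :=
    exists_inner_eq_of_linearIndependent (hli 0 2 (by decide)) ![e, c 0 + 1, c 2]
  obtain ⟨y, hy⟩ :=
    exists_inner_eq_of_linearIndependent (hli 1 2 (by decide)) ![e, c 1 + 1, c 2]
  simp only [Fin.forall_fin_succ, Fin.forall_fin_zero, Matrix.cons_val_zero, Matrix.cons_val_succ,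
    and_true] at hx hy
  have hgH₂ : ∀ z ∈ hyperplane v e ⊓ hyperplane (u 2) (c 2),
      m * ((⟪z, u 0⟫ - c 0) * (⟪z, u 1⟫ - c 1)) = 0 := fun z hz => by
    rw [← hm z hz.1, hgu 2 hz, Pi.zero_apply]
  have hxH : x ∈ hyperplane v e ⊓ hyperplane (u 2) (c 2) := ⟨hx.1, hx.2.2⟩
  have hyH : y ∈ hyperplane v e ⊓ hyperplane (u 2) (c 2) := ⟨hy.1, hy.2.2⟩
  have hmx := hgH₂ x hxH
  have hmy := hgH₂ y hyH
  have hmid := hgH₂ _ (AffineMap.lineMap_mem (1 / 2 : ℝ) hxH hyH)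
  simp only [AffineMap.lineMap_apply_module, inner_add_left, real_inner_smul_left, hx, hy]
    at hmx hmy hmid
  -- With `P = ⟪·, u 0⟫ - c 0` and `R = ⟪·, u 1⟫ - c 1`, the three equations are `m R(x) = 0`,
  -- `m P(y) = 0` and `m (1 + P(y)) (1 + R(x)) = 0`.
  linear_combination 4 * hmid - (⟪y, u 0⟫ - c 0 + 1) * hmx - hmy

variable {K : Set E}

theorem exists_common_isSliceEquation (hK : Convex ℝ K) {ι : Type*} [Finite ι] [Nonempty ι]
    {u : ι → E} (hu : LinearIndependent ℝ u) {c : ι → ℝ} {q : ι → E → ℝ}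
    (hq : ∀ i, IsSliceEquation K (hyperplane (u i) (c i)) (q i))
    (hmeet : ∀ i j, MeetInside K (hyperplane (u i) (c i)) (hyperplane (u j) (c j))) :
    ∃ Q, ∀ i, IsSliceEquation K (hyperplane (u i) (c i)) Q := by
  obtain ⟨i₀⟩ := ‹Nonempty ι›
  have hproportional : ∀ i, ∃ r > 0, EqOn (q i₀) (fun x => r * q i x)
      (hyperplane (u i₀) (c i₀) ⊓ hyperplane (u i) (c i) : AffineSubspace ℝ E) := fun i =>
    let ⟨_, hyK, hy⟩ := hmeet i₀ i
    ((hq i₀).mono inf_le_left).exists_eqOn_const_mul ((hq i).mono inf_le_right) hyK hy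
  choose r hr hreq using hproportional
  obtain ⟨z, hz⟩ := exists_inner_eq_of_linearIndependent hu c
  obtain ⟨Q, hQ, hQeq⟩ := exists_quadratic_eqOn_hyperplane hu c
    (fun i => (hq i).isQuadratic.const_mul (r i)) fun i j =>
      (hq i₀).eqOn_inf_of_eqOn_inf hK ((hq i).const_mul (hr i)) ((hq j).const_mul (hr j))
        ⟨⟨hz i₀, hz i⟩, hz j⟩ (hmeet i₀ i) (hmeet i₀ j) (hmeet i j) (hreq i) (hreq j)
  exact ⟨Q, fun i => ((hq i).const_mul (hr i)).congr hQ (hQeq i)⟩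

theorem IsSliceEquation.of_three_hyperplanes (hK : Convex ℝ K) {u : Fin 3 → E} {c : Fin 3 → ℝ}
    {v : E} {e : ℝ} {q Q : E → ℝ} (hQ : ∀ i, IsSliceEquation K (hyperplane (u i) (c i)) Q)
    (hq : IsSliceEquation K (hyperplane v e) q)
    (hmeet : ∀ i j, MeetInside K (hyperplane (u i) (c i)) (hyperplane (u j) (c j)))
    (hmeetv : ∀ i, MeetInside K (hyperplane v e) (hyperplane (u i) (c i)))
    (hli : ∀ i j, i ≠ j → LinearIndependent ℝ ![v, u i, u j]) :
    IsSliceEquation K (hyperplane v e) Q := by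
  obtain ⟨y, hyK, hy⟩ := (hmeetv 0).symm
  obtain ⟨r, hr, hreq⟩ :=
    ((hQ 0).mono inf_le_left).exists_eqOn_const_mul (hq.mono inf_le_right) hyK hy
  have hrq := hq.const_mul hr
  have heq : ∀ i, EqOn Q (fun x => r * q x)
      (hyperplane (u i) (c i) ⊓ hyperplane v e : AffineSubspace ℝ E) := fun i => by
    obtain rfl | hi := eq_or_ne i 0
    · exact hreq
    obtain ⟨z, hz⟩ := exists_inner_eq_of_linearIndependent (hli 0 i hi.symm) ![e, c 0, c i]
    exact (hQ 0).eqOn_inf_of_eqOn_inf hK (hQ i) hrq ⟨⟨hz 1, hz 2⟩, hz 0⟩ (hmeet 0 i)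
      (hmeetv 0).symm (hmeetv i).symm (eqOn_refl _ _) hreq
  have hsub := eqOn_zero_of_eqOn_zero_inf ((hQ 0).isQuadratic.sub hrq.isQuadratic) hli
    fun i x hx => sub_eq_zero.2 (heq i ⟨hx.2, hx.1⟩)
  exact hrq.congr (hQ 0).isQuadratic fun x hx => sub_eq_zero.1 (hsub hx)

end Hyperplanes

section GenericHyperplanes

open Filter Topology Module

variable {E : Type*} [NormedAddCommGroup E] [InnerProductSpace ℝ E]
variable {K V : Set E} {D : E → ℝ}

theorem MeetInside.eventually_nhds {a v : E} {c : ℝ}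
    (h : MeetInside K (hyperplane a c) (hyperplane v (D v))) (hli : LinearIndependent ℝ ![a, v])
    (hD : ContinuousAt D v) :
    ∀ᶠ v' in 𝓝 v, MeetInside K (hyperplane a c) (hyperplane v' (D v')) := by
  obtain ⟨y, hyK, hya, hyv⟩ := h
  rw [SetLike.mem_coe, mem_hyperplane] at hya hyv
  obtain ⟨w, hw⟩ := exists_inner_eq_of_linearIndependent hli ![0, 1]
  obtain ⟨hwa, hwv⟩ : ⟪w, a⟫ = 0 ∧ ⟪w, v⟫ = 1 := ⟨hw 0, hw 1⟩
  let shifted : E → E := fun v' => y + ((D v' - ⟪y, v'⟫) / ⟪w, v'⟫) • w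
  have hcont : ContinuousAt shifted v := by
    have hwv0 : ⟪w, v⟫ ≠ 0 := hwv ▸ one_ne_zero
    fun_prop (disch := assumption)
  have hshifted : shifted v ∈ interior K := by simpa [shifted, hyv] using hyK
  have hne : ∀ᶠ v' in 𝓝 v, ⟪w, v'⟫ ≠ 0 :=
    ContinuousAt.eventually_ne (by fun_prop) (hwv ▸ one_ne_zero)
  filter_upwards [hne, hcont.eventually_mem (isOpen_interior.mem_nhds hshifted)] with v' hv' hmem
  refine ⟨shifted v', hmem, ?_, ?_⟩
  · simp [shifted, mem_hyperplane, inner_add_left, real_inner_smul_left, hwa, hya]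
  · simp [shifted, mem_hyperplane, inner_add_left, real_inner_smul_left, div_mul_cancel₀ _ hv']

theorem exists_mem_interior_mul_neg {p q y₀ : E} {c : ℝ} (e : ℝ)
    (hli : LinearIndependent ℝ ![p, q]) (hy₀ : y₀ ∈ interior K) (hp : y₀ ∈ hyperplane p c) :
    ∃ y ∈ interior K, (⟪y, p⟫ - c) * (⟪y, q⟫ - e) < 0 := by
  obtain ⟨w, hw⟩ := exists_inner_eq_of_linearIndependent hli ![1, -1]
  obtain ⟨hwp, hwq⟩ : ⟪w, p⟫ = 1 ∧ ⟪w, q⟫ = -1 := ⟨hw 0, hw 1⟩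
  have hprod : ∀ t : ℝ, (⟪y₀ + t • w, p⟫ - c) * (⟪y₀ + t • w, q⟫ - e) =
      t * (⟪y₀, q⟫ - e - t) := fun t => by
    rw [inner_add_left, inner_add_left, real_inner_smul_left, real_inner_smul_left, hwp, hwq,
      mem_hyperplane.1 hp]
    ring
  have hnear : ∀ᶠ t : ℝ in 𝓝 0, y₀ + t • w ∈ interior K :=
    ContinuousAt.eventually_mem (by fun_prop) (isOpen_interior.mem_nhds (by simpa using hy₀))
  obtain ⟨ε, hε, hball⟩ := Metric.eventually_nhds_iff.1 hnear
  rcases le_or_gt (⟪y₀, q⟫ - e) 0 with hle | hgt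
  · refine ⟨_, hball (y := ε / 2) (by simp [abs_of_pos hε, hε]), ?_⟩
    rw [hprod]
    exact mul_neg_of_pos_of_neg (by linarith) (by linarith)
  · refine ⟨_, hball (y := -(ε / 2)) (by simp [abs_of_pos hε, hε]), ?_⟩
    rw [hprod]
    exact mul_neg_of_neg_of_pos (by linarith) (by linarith)

theorem exists_mem_segment_mem_hyperplane {p q x : E} (hD : ContinuousOn D (segment ℝ p q))
    (hx : (⟪x, p⟫ - D p) * (⟪x, q⟫ - D q) < 0) :
    ∃ v ∈ segment ℝ p q, x ∈ hyperplane v (D v) := by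
  have hcont : ContinuousOn (fun v => ⟪x, v⟫ - D v) (segment ℝ p q) := by fun_prop
  have hpre := (convex_segment (𝕜 := ℝ) p q).isPreconnected
  have hzero : (0 : ℝ) ∈ (fun v => ⟪x, v⟫ - D v) '' segment ℝ p q := by
    rcases mul_neg_iff.1 hx with ⟨hp, hq⟩ | ⟨hp, hq⟩
    · exact hpre.intermediate_value (right_mem_segment ℝ p q) (left_mem_segment ℝ p q) hcont
        ⟨hq.le, hp.le⟩
    · exact hpre.intermediate_value (left_mem_segment ℝ p q) (right_mem_segment ℝ p q) hcont
        ⟨hp.le, hq.le⟩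
  obtain ⟨v, hv, hxv⟩ := hzero
  exact ⟨v, hv, sub_eq_zero.1 hxv⟩

theorem linearIndependent_pair_of_notMem_span {a v : E} (ha : a ≠ 0)
    (hv : v ∉ Submodule.span ℝ {a}) : LinearIndependent ℝ ![a, v] := by
  rw [LinearIndependent.pair_iff' ha]
  simpa [Submodule.mem_span_singleton] using hv

theorem linearIndependent_triple_of_notMem_span {v a b : E} (hli : LinearIndependent ℝ ![a, b])
    (hv : v ∉ Submodule.span ℝ {a, b}) : LinearIndependent ℝ ![v, a, b] :=
  linearIndependent_finCons.2 ⟨hli, by rwa [Matrix.range_cons_cons_empty]⟩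

theorem span_pair_ne_top (hE : 2 < finrank ℝ E) (a b : E) : Submodule.span ℝ {a, b} ≠ ⊤ := by
  classical
  refine (span_lt_top_of_card_lt_finrank (lt_of_le_of_lt ?_ hE)).ne
  simpa using Finset.card_le_two

theorem span_singleton_ne_top (hE : 1 < finrank ℝ E) (a : E) : Submodule.span ℝ {a} ≠ ⊤ :=
  (span_lt_top_of_card_lt_finrank (by simpa using hE)).ne

variable [FiniteDimensional ℝ E]

theorem exists_mem_forall_notMem_submodule {ι : Type*} [Finite ι] {S : ι → Submodule ℝ E}
    (hS : ∀ i, S i ≠ ⊤) (hV : IsOpen V) (hVne : V.Nonempty) : ∃ v ∈ V, ∀ i, v ∉ S i := by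
  have hdense : Dense (⋂ i, (S i : Set E)ᶜ) := by
    refine dense_iInter_of_isOpen (fun i => (S i).closed_of_finiteDimensional.isOpen_compl)
      fun i => interior_eq_empty_iff_dense_compl.1 ?_
    by_contra! hne
    exact hS i ((S i).eq_top_of_nonempty_interior' hne)
  obtain ⟨v, hvV, hv⟩ := hdense.inter_open_nonempty V hV hVne
  exact ⟨v, hvV, mem_iInter.1 hv⟩

theorem exists_sign_change (hE : 1 < finrank ℝ E) (hV : IsOpen V) (hVne : V.Nonempty)
    (hcut : ∀ v ∈ V, ∃ y ∈ interior K, y ∈ hyperplane v (D v)) :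
    ∃ p ∈ V, ∃ q ∈ V, ∃ y ∈ interior K, (⟪y, p⟫ - D p) * (⟪y, q⟫ - D q) < 0 := by
  obtain ⟨p, hpV, hp⟩ := exists_mem_forall_notMem_submodule (ι := Unit)
    (fun _ => span_singleton_ne_top hE 0) hV hVne
  obtain ⟨q, hqV, hq⟩ := exists_mem_forall_notMem_submodule (ι := Unit)
    (fun _ => span_singleton_ne_top hE p) hV hVne
  have hp0 : p ≠ 0 := by simpa using hp
  have hli := linearIndependent_pair_of_notMem_span hp0 (hq ())
  obtain ⟨y, hyK, hy⟩ := hcut p hpV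
  exact ⟨p, hpV, q, hqV, exists_mem_interior_mul_neg (D q) hli hyK hy⟩

theorem exists_mem_hyperplane_notMem_span (hE : 2 < finrank ℝ E) (hV : IsOpen V)
    (hVc : Convex ℝ V) (hD : ContinuousOn D V) {p q x : E} (hp : p ∈ V) (hq : q ∈ V)
    (hx : (⟪x, p⟫ - D p) * (⟪x, q⟫ - D q) < 0) {s : Set E} (hs : s.Finite) :
    ∃ v ∈ V, x ∈ hyperplane v (D v) ∧ ∀ a ∈ s, v ∉ Submodule.span ℝ {a} := by
  have := hs.to_subtype
  have hnear : ∀ᶠ p' in 𝓝 p, p' ∈ V ∧ (⟪x, p'⟫ - D p') * (⟪x, q⟫ - D q) < 0 := by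
    have hDp := hD.continuousAt (hV.mem_nhds hp)
    exact (hV.eventually_mem hp).and
      (ContinuousAt.eventually_lt (by fun_prop) continuousAt_const hx)
  obtain ⟨N, hN, hNo, hpN⟩ := _root_.eventually_nhds_iff.1 hnear
  obtain ⟨p', hp'N, hp'⟩ := exists_mem_forall_notMem_submodule
    (fun a : s => span_pair_ne_top hE q a) hNo ⟨p, hpN⟩
  obtain ⟨hp'V, hx'⟩ := hN p' hp'N
  have hseg : segment ℝ p' q ⊆ V := hVc.segment_subset hp'V hq
  obtain ⟨v, hvseg, hxv⟩ := exists_mem_segment_mem_hyperplane (hD.mono hseg) hx'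
  refine ⟨v, hseg hvseg, hxv, fun a ha hva => hp' ⟨a, ha⟩ ?_⟩
  obtain ⟨r, t, -, -, hrt, rfl⟩ := hvseg
  have hr : r ≠ 0 := by
    rintro rfl
    rw [zero_add] at hrt
    rw [hrt, zero_smul, one_smul, zero_add] at hxv
    rw [mem_hyperplane.1 hxv, sub_self, mul_zero] at hx'
    exact hx'.false
  have hrp : r • p' ∈ Submodule.span ℝ {q, a} := by
    rw [← add_sub_cancel_right (r • p') (t • q)]
    exact sub_mem (Submodule.span_mono (by simp) hva)
      (Submodule.smul_mem _ t (Submodule.subset_span (by simp)))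
  exact (Submodule.smul_mem_iff _ hr).1 hrp

theorem exists_pairwise_linearIndependent_normals (hE : 2 < finrank ℝ E) (hV : IsOpen V)
    (hVc : Convex ℝ V) (hD : ContinuousOn D V) {p q x : E} (hp : p ∈ V) (hq : q ∈ V)
    (hx : (⟪x, p⟫ - D p) * (⟪x, q⟫ - D q) < 0) (k : ℕ) :
    ∃ u : Fin k → E, (∀ i, u i ∈ V ∧ u i ≠ 0 ∧ x ∈ hyperplane (u i) (D (u i))) ∧
      Pairwise fun i j => LinearIndependent ℝ ![u i, u j] := by
  induction k with
  | zero => exact ⟨Fin.elim0, fun i => i.elim0, fun i => i.elim0⟩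
  | succ k ih =>
    obtain ⟨u, hu, hli⟩ := ih
    obtain ⟨v, hvV, hxv, hv⟩ := exists_mem_hyperplane_notMem_span hE hV hVc hD hp hq hx
      ((finite_range u).insert 0)
    have hv0 : v ≠ 0 := by simpa using hv 0 (mem_insert _ _)
    have hliv : ∀ i, LinearIndependent ℝ ![u i, v] := fun i =>
      linearIndependent_pair_of_notMem_span (hu i).2.1 (hv (u i) (by simp))
    refine ⟨Fin.cons v u, ?_, ?_⟩
    · rw [Fin.forall_fin_succ]
      exact ⟨⟨hvV, hv0, hxv⟩, hu⟩
    · intro i j hij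
      cases i using Fin.cases <;> cases j using Fin.cases
      · exact absurd rfl hij
      · simpa using LinearIndependent.pair_symm_iff.1 (hliv _)
      · simpa using hliv _
      · simpa using hli (by simpa using hij)

theorem exists_three_normals (hE : 2 < finrank ℝ E) (hV : IsOpen V) (hVc : Convex ℝ V)
    (hVne : V.Nonempty) (hD : ContinuousOn D V)
    (hcut : ∀ v ∈ V, ∃ y ∈ interior K, y ∈ hyperplane v (D v)) :
    ∃ u : Fin 3 → E, ∃ a ∈ V, LinearIndependent ℝ u ∧ (∀ i, u i ∈ V) ∧
      (∀ i j, MeetInside K (hyperplane (u i) (D (u i))) (hyperplane (u j) (D (u j)))) ∧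
      ∀ i, LinearIndependent ℝ ![u i, a] ∧
        MeetInside K (hyperplane (u i) (D (u i))) (hyperplane a (D a)) := by
  obtain ⟨p, hp, q, hq, y, hyK, hy⟩ := exists_sign_change (one_lt_two.trans hE) hV hVne hcut
  obtain ⟨a, ha, hli⟩ := exists_pairwise_linearIndependent_normals hE hV hVc hD hp hq hy 4
  have hmeet : ∀ i j, MeetInside K (hyperplane (a i) (D (a i))) (hyperplane (a j) (D (a j))) :=
    fun i j => ⟨y, hyK, (ha i).2.2, (ha j).2.2⟩
  have hnear : ∀ᶠ b in 𝓝 (a 2), b ∈ V ∧ b ∉ Submodule.span ℝ {a 3} ∧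
      ∀ j, j ≠ 2 → MeetInside K (hyperplane (a j) (D (a j))) (hyperplane b (D b)) := by
    refine (hV.eventually_mem (ha 2).1).and (.and ?_ (eventually_all.2 fun j =>
      eventually_imp_distrib_left.2 fun hj => (hmeet j 2).eventually_nhds (hli hj)
        (hD.continuousAt (hV.mem_nhds (ha 2).1))))
    refine (Submodule.closed_of_finiteDimensional _).isOpen_compl.eventually_mem ?_
    have h32 := (LinearIndependent.pair_iff' (ha 3).2.1).1 (hli (by decide : (3 : Fin 4) ≠ 2))
    simpa [Submodule.mem_span_singleton] using h32
  obtain ⟨N, hN, hNo, haN⟩ := _root_.eventually_nhds_iff.1 hnear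
  obtain ⟨b, hbN, hb⟩ := exists_mem_forall_notMem_submodule (ι := Unit)
    (fun _ => span_pair_ne_top hE (a 0) (a 1)) hNo ⟨a 2, haN⟩
  obtain ⟨hbV, hb3, hmeetb⟩ := hN b hbN
  have hmeetbb : MeetInside K (hyperplane b (D b)) (hyperplane b (D b)) :=
    let ⟨y, hyK, hy⟩ := hcut b hbV
    ⟨y, hyK, hy, hy⟩
  have hmeet0 := hmeetb 0 (by decide)
  have hmeet1 := hmeetb 1 (by decide)
  refine ⟨![b, a 0, a 1], a 3, (ha 3).1,
    linearIndependent_triple_of_notMem_span (hli (by decide)) (hb ()), ?_, ?_, ?_⟩ <;>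
    simp only [Fin.forall_fin_succ, Fin.forall_fin_zero, Matrix.cons_val_zero,
      Matrix.cons_val_succ, and_true]
  · exact ⟨hbV, (ha 0).1, (ha 1).1⟩
  · exact ⟨⟨hmeetbb, hmeet0.symm, hmeet1.symm⟩, ⟨hmeet0, hmeet 0 0, hmeet 0 1⟩,
      hmeet1, hmeet 1 0, hmeet 1 1⟩
  · exact ⟨⟨LinearIndependent.pair_symm_iff.1
        (linearIndependent_pair_of_notMem_span (ha 3).2.1 hb3), (hmeetb 3 (by decide)).symm⟩,
      ⟨hli (by decide), hmeet 0 3⟩, hli (by decide), hmeet 1 3⟩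

theorem exists_open_generic_normals (hE : 2 < finrank ℝ E) (hV : IsOpen V)
    (hD : ContinuousOn D V) {u : Fin 3 → E} {a : E} (haV : a ∈ V) (hu : LinearIndependent ℝ u)
    (hli : ∀ i, LinearIndependent ℝ ![u i, a])
    (hmeet : ∀ i, MeetInside K (hyperplane (u i) (D (u i))) (hyperplane a (D a))) :
    ∃ N ⊆ V, IsOpen N ∧ N.Nonempty ∧ ∀ v ∈ N,
      (∀ i, MeetInside K (hyperplane v (D v)) (hyperplane (u i) (D (u i)))) ∧
      ∀ i j, i ≠ j → LinearIndependent ℝ ![v, u i, u j] := by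
  have hnear : ∀ᶠ v in 𝓝 a, v ∈ V ∧
      ∀ i, MeetInside K (hyperplane (u i) (D (u i))) (hyperplane v (D v)) :=
    (hV.eventually_mem haV).and (eventually_all.2 fun i =>
      (hmeet i).eventually_nhds (hli i) (hD.continuousAt (hV.mem_nhds haV)))
  obtain ⟨N, hN, hNo, haN⟩ := _root_.eventually_nhds_iff.1 hnear
  let S : Fin 3 × Fin 3 → Submodule ℝ E := fun ij => Submodule.span ℝ {u ij.1, u ij.2}
  obtain ⟨v, hvN, hv⟩ := exists_mem_forall_notMem_submodule (S := S)
    (fun _ => span_pair_ne_top hE _ _) hNo ⟨a, haN⟩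
  refine ⟨N ∩ ⋂ ij, (S ij : Set E)ᶜ, fun v hv => (hN v hv.1).1,
    hNo.inter (isOpen_iInter_of_finite fun ij => (S ij).closed_of_finiteDimensional.isOpen_compl),
    ⟨v, hvN, mem_iInter.2 hv⟩, fun v hv => ⟨fun i => ((hN v hv.1).2 i).symm, fun i j hij => ?_⟩⟩
  have hinj : Function.Injective ![i, j] :=
    (Fin.cons_injective_iff (n := 1)).2 ⟨by simpa using hij, Function.injective_of_subsingleton _⟩
  have hpair : LinearIndependent ℝ ![u i, u j] := by
    convert hu.comp ![i, j] hinj using 1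
    ext k
    fin_cases k <;> rfl
  exact linearIndependent_triple_of_notMem_span hpair (mem_iInter.1 hv.2 (i, j))

theorem exists_isSliceEquation_on_open (hE : 2 < finrank ℝ E) (hK : Convex ℝ K) (hV : IsOpen V)
    (hVc : Convex ℝ V) (hVne : V.Nonempty) (hD : ContinuousOn D V)
    (hcut : ∀ v ∈ V, ∃ y ∈ interior K, y ∈ hyperplane v (D v))
    (hslice : ∀ v ∈ V, ∃ q, IsSliceEquation K (hyperplane v (D v)) q) :
    ∃ Q, ∃ N ⊆ V, IsOpen N ∧ N.Nonempty ∧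
      ∀ v ∈ N, IsSliceEquation K (hyperplane v (D v)) Q := by
  obtain ⟨u, a, haV, hu, huV, hmeet, hua⟩ := exists_three_normals hE hV hVc hVne hD hcut
  choose q hq using fun i => hslice (u i) (huV i)
  obtain ⟨Q, hQ⟩ := exists_common_isSliceEquation hK hu hq hmeet
  obtain ⟨N, hNV, hNo, hNne, hN⟩ := exists_open_generic_normals hE hV hD haV hu
    (fun i => (hua i).1) fun i => (hua i).2
  refine ⟨Q, N, hNV, hNo, hNne, fun v hv => ?_⟩
  obtain ⟨q, hq⟩ := hslice v (hNV hv)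
  exact .of_three_hyperplanes hK hQ hq hmeet (hN v hv).1 (hN v hv).2

theorem exists_open_inter_frontier_swept (hE : 2 < finrank ℝ E) {N : Set E} (hN : IsOpen N)
    (hNne : N.Nonempty) (hD : ContinuousOn D N)
    (hb : ∀ v ∈ N, ∀ c, Bornology.IsBounded (K ∩ hyperplane v c))
    (hcut : ∀ v ∈ N, ∃ y ∈ interior K, y ∈ hyperplane v (D v)) :
    ∃ W, IsOpen W ∧ (W ∩ frontier K).Nonempty ∧ ∀ x ∈ W, ∃ v ∈ N, x ∈ hyperplane v (D v) := by
  obtain ⟨v₀, hv₀⟩ := hNne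
  obtain ⟨ε, hε, hball⟩ := Metric.isOpen_iff.1 hN v₀ hv₀
  obtain ⟨p, hp, q, hq, y, hyK, hy⟩ := exists_sign_change (one_lt_two.trans hE) isOpen_ball
    ⟨v₀, mem_ball_self hε⟩ fun v hv => hcut v (hball hv)
  refine ⟨{x | (⟪x, p⟫ - D p) * (⟪x, q⟫ - D q) < 0}, isOpen_lt (by fun_prop) (by fun_prop), ?_,
    fun x hx => ?_⟩
  · obtain ⟨w, hw, hw0⟩ := (Submodule.span ℝ {p, q})ᗮ.exists_mem_ne_zero_of_ne_bot
      (mt Submodule.orthogonal_eq_bot_iff.1 (span_pair_ne_top hE p q))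
    have hwp : ⟪w, p⟫ = 0 :=
      Submodule.inner_left_of_mem_orthogonal (Submodule.subset_span (by simp)) hw
    have hwq : ⟪w, q⟫ = 0 :=
      Submodule.inner_left_of_mem_orthogonal (Submodule.subset_span (by simp)) hw
    obtain ⟨b, -, hbK⟩ := exists_pos_lineMap_mem_frontier (x := y + w) (hb p (hball hp) ⟪y, p⟫)
      hyK rfl (by rw [mem_hyperplane, inner_add_left, hwp, add_zero]) (by simpa using hw0)
    refine ⟨_, ?_, hbK⟩
    simpa [AffineMap.lineMap_apply_module', inner_add_left, real_inner_smul_left, hwp, hwq] using hy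
  · have hseg : segment ℝ p q ⊆ N := ((convex_ball v₀ ε).segment_subset hp hq).trans hball
    obtain ⟨v, hv, hxv⟩ := exists_mem_segment_mem_hyperplane (hD.mono hseg) hx
    exact ⟨v, hseg hv, hxv⟩

theorem exists_isSliceEquation_eq_zero_on_frontier (hE : 2 < finrank ℝ E) (hK : Convex ℝ K)
    (hV : IsOpen V) (hVc : Convex ℝ V) (hVne : V.Nonempty) (hD : ContinuousOn D V)
    (hb : ∀ v ∈ V, ∀ c, Bornology.IsBounded (K ∩ hyperplane v c))
    (hcut : ∀ v ∈ V, ∃ y ∈ interior K, y ∈ hyperplane v (D v))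
    (hslice : ∀ v ∈ V, ∃ q, IsSliceEquation K (hyperplane v (D v)) q) :
    ∃ Q, (∃ v ∈ V, IsSliceEquation K (hyperplane v (D v)) Q) ∧
      ∃ W, IsOpen W ∧ (W ∩ frontier K).Nonempty ∧ ∀ x ∈ W ∩ frontier K, Q x = 0 := by
  obtain ⟨Q, N, hNV, hNo, hNne, hN⟩ :=
    exists_isSliceEquation_on_open hE hK hV hVc hVne hD hcut hslice
  obtain ⟨W, hWo, hWne, hW⟩ := exists_open_inter_frontier_swept hE hNo hNne (hD.mono hNV)
    (fun v hv => hb v (hNV hv)) fun v hv => hcut v (hNV hv)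
  obtain ⟨v, hv⟩ := hNne
  refine ⟨Q, ⟨v, hNV hv, hN v hv⟩, W, hWo, hWne, fun x hx => ?_⟩
  obtain ⟨v, hv, hxv⟩ := hW x hx.1
  exact (hN v hv).eq_zero x hxv hx.2

end GenericHyperplanes

section BoundedSlices

open Topology

variable {E : Type*} [NormedAddCommGroup E] [InnerProductSpace ℝ E] {K : Set E} {x₀ v₀ : E}

theorem exists_pos_mul_norm_le_abs_inner [FiniteDimensional ℝ E] (hK : Convex ℝ K)
    (hKc : IsClosed K) (hx₀ : x₀ ∈ K) (hv₀ : (K ∩ hyperplane v₀ ⟪x₀, v₀⟫).Subsingleton) :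
    ∃ η > 0, ∀ x ∈ K, 1 ≤ ‖x - x₀‖ → η * ‖x - x₀‖ ≤ |⟪x - x₀, v₀⟫| := by
  have hpos : ∀ z ∈ K ∩ sphere x₀ 1, 0 < |⟪z - x₀, v₀⟫| := fun z hz => by
    rw [abs_pos, inner_sub_left, sub_ne_zero]
    intro hz₀
    have hzx : z = x₀ := hv₀ ⟨hz.1, hz₀⟩ ⟨hx₀, rfl⟩
    simpa [hzx] using hz.2
  obtain ⟨η, hη, hle⟩ := ((isCompact_sphere x₀ 1).inter_left hKc).exists_forall_le'
    (by fun_prop) hpos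
  refine ⟨η, hη, fun x hx hx1 => ?_⟩
  have hnorm : 0 < ‖x - x₀‖ := one_pos.trans_le hx1
  have hunit : x₀ + ‖x - x₀‖⁻¹ • (x - x₀) ∈ K ∩ sphere x₀ 1 :=
    ⟨hK.add_smul_sub_mem hx₀ hx ⟨by positivity, inv_le_one_of_one_le₀ hx1⟩, by
      simp [norm_smul, inv_mul_cancel₀ hnorm.ne']⟩
  have := hle _ hunit
  rwa [add_sub_cancel_left, real_inner_smul_left, abs_mul, abs_inv, abs_norm,
    inv_mul_eq_div, le_div_iff₀ hnorm] at this

theorem isBounded_inter_hyperplane {η c : ℝ} {v : E}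
    (hη : ∀ x ∈ K, 1 ≤ ‖x - x₀‖ → η * ‖x - x₀‖ ≤ |⟪x - x₀, v₀⟫|) (hv : dist v v₀ < η) :
    Bornology.IsBounded (K ∩ hyperplane v c) := by
  have hgap : 0 < η - ‖v - v₀‖ := by rwa [sub_pos, ← dist_eq_norm]
  refine isBounded_closedBall.subset fun x ⟨hxK, hx⟩ => (?_ :
    x ∈ closedBall x₀ (max 1 (|c - ⟪x₀, v⟫| / (η - ‖v - v₀‖))))
  rw [mem_closedBall, dist_eq_norm, le_max_iff, or_iff_not_imp_left, le_div_iff₀ hgap]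
  intro hfar
  have hsplit : ⟪x - x₀, v₀⟫ = c - ⟪x₀, v⟫ - ⟪x - x₀, v - v₀⟫ := by
    rw [inner_sub_right, inner_sub_left x x₀ v, mem_hyperplane.1 hx, sub_sub_cancel]
  calc ‖x - x₀‖ * (η - ‖v - v₀‖) = η * ‖x - x₀‖ - ‖x - x₀‖ * ‖v - v₀‖ := by ring
    _ ≤ |⟪x - x₀, v₀⟫| - |⟪x - x₀, v - v₀⟫| :=
      sub_le_sub (hη x hxK (not_le.1 hfar).le) (abs_real_inner_le_norm _ _)
    _ ≤ |c - ⟪x₀, v⟫| := by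
      rw [hsplit, sub_le_iff_le_add]
      exact abs_sub _ _

theorem exists_inner_lt_of_notMem_interior [CompleteSpace E] (hK : Convex ℝ K)
    (hx₀ : x₀ ∉ interior K) : ∃ v, ∀ y ∈ interior K, ⟪y, v⟫ < ⟪x₀, v⟫ := by
  obtain ⟨f, hf⟩ := geometric_hahn_banach_open_point hK.interior isOpen_interior hx₀
  refine ⟨(InnerProductSpace.toDual ℝ E).symm f, fun y hy => ?_⟩
  rw [real_inner_comm, real_inner_comm _ x₀, InnerProductSpace.toDual_symm_apply,
    InnerProductSpace.toDual_symm_apply]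
  exact hf y hy

theorem IsStrictlyConvexSet.subsingleton_closure_inter {n : ℕ} {K H : Set (En n)}
    (hKsc : IsStrictlyConvexSet K) (hK : Convex ℝ K) (hH : Convex ℝ H)
    (hdisj : Disjoint (interior K) H) : (closure K ∩ H).Subsingleton := by
  have hfrontier : closure K ∩ H ⊆ frontier K := fun x hx =>
    ⟨hx.1, fun hxK => disjoint_left.1 hdisj hxK hx.2⟩
  intro x hx y hy
  by_contra hxy
  exact hKsc x (hfrontier hx) y (hfrontier hy) hxy
    (((hK.closure.inter hH).segment_subset hx hy).trans hfrontier)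

theorem IsStrictlyConvexSet.exists_eventually_isBounded_inter_hyperplane {n : ℕ} {K : Set (En n)}
    (hKsc : IsStrictlyConvexSet K) (hK : Convex ℝ K) (hint : (interior K).Nonempty)
    (hfr : (frontier K).Nonempty) :
    ∃ v₀ : En n, v₀ ≠ 0 ∧ ∀ᶠ v in 𝓝 v₀, ∀ c, Bornology.IsBounded (K ∩ hyperplane v c) := by
  obtain ⟨y, hy⟩ := hint
  obtain ⟨x₀, hx₀⟩ := hfr
  obtain ⟨v₀, hv₀⟩ := exists_inner_lt_of_notMem_interior hK hx₀.2
  have hsub := hKsc.subsingleton_closure_inter hK (hyperplane v₀ ⟪x₀, v₀⟫).convex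
    (disjoint_left.2 fun y hy hyH => (hv₀ y hy).ne hyH)
  obtain ⟨η, hη, hle⟩ := exists_pos_mul_norm_le_abs_inner hK.closure isClosed_closure hx₀.1 hsub
  refine ⟨v₀, ?_, Metric.eventually_nhds_iff.2 ⟨η, hη, fun v hv c => ?_⟩⟩
  · rintro rfl
    simpa using hv₀ y hy
  · exact isBounded_inter_hyperplane (fun x hx => hle x (subset_closure hx)) hv

end BoundedSlices

section ConvexQuadrics

theorem frontier_connectedComponentIn_subset_compl {X : Type*} [TopologicalSpace X]
    [LocallyConnectedSpace X] {F : Set X} (hF : IsOpen F) (x : X) :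
    frontier (connectedComponentIn F x) ⊆ Fᶜ := by
  intro z hz hzF
  obtain ⟨w, hwz, hwx⟩ := mem_closure_iff.1 hz.1 _ hF.connectedComponentIn
    (mem_connectedComponentIn hzF)
  have heq := (connectedComponentIn_eq hwz).trans (connectedComponentIn_eq hwx).symm
  rw [hF.connectedComponentIn.frontier_eq, ← heq] at hz
  exact hz.2 (mem_connectedComponentIn hzF)

theorem frontier_nontrivial_of_isOpen_of_convex {F : Type*} [NormedAddCommGroup F]
    [NormedSpace ℝ F] (hF : 1 < Module.rank ℝ F) {U : Set F} (hUo : IsOpen U)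
    (hUc : Convex ℝ U) (hUne : U.Nonempty) (hU : U ≠ univ) : (frontier U).Nontrivial := by
  by_contra hs
  rw [not_nontrivial_iff] at hs
  obtain ⟨p, hp⟩ := nonempty_frontier_iff.2 ⟨hUne, hU⟩
  have hpU : p ∉ U := hUo.frontier_eq ▸ hp |>.2
  have hcompl : {p}ᶜ ⊆ U := fun z hz => by
    by_contra hzU
    obtain ⟨x, hx⟩ := hUne
    obtain ⟨w, hwp, hw⟩ := inter_frontier_nonempty_of_isPreconnected
      (isConnected_compl_singleton_of_one_lt_rank hF p).isPreconnected
      ⟨x, fun hxp => hpU (mem_singleton_iff.1 hxp ▸ hx), hx⟩ ⟨z, hz, hzU⟩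
    exact hwp (hs hw hp)
  have : Nontrivial F := rank_pos_iff_nontrivial.1 (zero_lt_one.trans hF)
  obtain ⟨d, hd⟩ := exists_ne (0 : F)
  have hmid : midpoint ℝ (p + d) (p - d) ∈ U :=
    hUc.midpoint_mem (hcompl (by simpa using hd)) (hcompl (by simpa using hd))
  exact hpU (by simpa using hmid)

theorem isQuadratic_sum_matrix {m : ℕ} (a : Matrix (Fin m) (Fin m) ℝ) (b : Fin m → ℝ) (c : ℝ) :
    IsQuadratic fun x : En m => (∑ i, ∑ k, a i k * x i * x k) + 2 * (∑ i, b i * x i) + c := by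
  let coord : Fin m → En m →ₗ[ℝ] ℝ := fun i => (EuclideanSpace.proj i : En m →L[ℝ] ℝ)
  refine ⟨∑ i, ∑ k, a i k • (LinearMap.mul ℝ ℝ).compl₁₂ (coord i) (coord k),
    (2 : ℝ) • ∑ i, b i • coord i, c, fun x => ?_⟩
  simp [coord, mul_assoc]

theorem exists_isSymm_sum_eq_apply_self {m : ℕ} (B : En m →ₗ[ℝ] En m →ₗ[ℝ] ℝ) :
    ∃ a : Matrix (Fin m) (Fin m) ℝ, a.IsSymm ∧ ∀ x, ∑ i, ∑ k, a i k * x i * x k = B x x := by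
  let e := (EuclideanSpace.basisFun (Fin m) ℝ).toBasis
  refine ⟨Matrix.of fun i k => (B (e i) (e k) + B (e k) (e i)) / 2,
    Matrix.IsSymm.ext fun i k => by simp only [Matrix.of_apply, add_comm], fun x => ?_⟩
  have hsum : ∑ i, ∑ k, x i * (x k * B (e i) (e k)) = B x x := by
    simpa [Finsupp.sum_fintype, e] using LinearMap.sum_repr_mul_repr_mul e e x x (B := B)
  have hsum_swap : ∑ i, ∑ k, x i * (x k * B (e k) (e i)) = B x x := by
    rw [Finset.sum_comm, ← hsum]
    simp only [mul_left_comm]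
  calc ∑ i, ∑ k, (B (e i) (e k) + B (e k) (e i)) / 2 * x i * x k
      = ∑ i, ∑ k, (x i * (x k * B (e i) (e k)) / 2 + x i * (x k * B (e k) (e i)) / 2) := by
        refine Finset.sum_congr rfl fun i _ => Finset.sum_congr rfl fun k _ => ?_
        ring
    _ = B x x := by
        simp only [Finset.sum_add_distrib, ← Finset.sum_div, hsum, hsum_swap, add_halves]

theorem exists_sum_eq_apply {m : ℕ} (l : En m →ₗ[ℝ] ℝ) :
    ∃ b : Fin m → ℝ, ∀ x : En m, ∑ i, b i * x i = l x := by
  let e := (EuclideanSpace.basisFun (Fin m) ℝ).toBasis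
  refine ⟨fun i => l (e i), fun x => ?_⟩
  conv_rhs => rw [← e.sum_repr x, map_sum]
  simp [e, mul_comm]

theorem IsQuadratic.isQuadricSurface {m : ℕ} {q : En m → ℝ} (hq : IsQuadratic q) {x v : En m}
    (hne : q (x + v) + q (x - v) ≠ 2 * q x) : IsQuadricSurface {x | q x = 0} := by
  obtain ⟨B, l, c, hq⟩ := hq
  obtain ⟨a, hsymm, ha⟩ := exists_isSymm_sum_eq_apply_self B
  obtain ⟨b, hb⟩ := exists_sum_eq_apply ((2⁻¹ : ℝ) • l)
  refine ⟨a, b, c, hsymm, fun ha0 => hne ?_, ?_⟩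
  · have hB0 : ∀ x, B x x = 0 := fun x => by simp [← ha, ha0]
    simp only [hq, hB0]
    simp only [map_add, map_sub]
    ring
  · ext x
    rw [mem_ofPred_eq, mem_ofPred_eq, ha, hb, hq, LinearMap.smul_apply, smul_eq_mul,
      mul_inv_cancel_left₀ two_ne_zero]

variable {m n : ℕ}

theorem IsConvexQuadric.exists_frontier_eq {S : Set (En m)} (hS : IsConvexQuadric S) :
    ∃ U, IsOpen U ∧ Convex ℝ U ∧ U.Nonempty ∧ U ≠ univ ∧ S = frontier U ∧
      ∃ q, IsQuadratic q ∧ (∀ x ∈ frontier U, q x = 0) ∧ ∀ x ∈ U, q x < 0 := by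
  obtain ⟨_, U, ⟨⟨a, b, c, -, -, rfl⟩, z, hz⟩, ⟨x₀, hx₀, hU⟩, hUc, rfl⟩ := hS
  let q : En m → ℝ := fun x => (∑ i, ∑ k, a i k * x i * x k) + 2 * (∑ i, b i * x i) + c
  have hq : IsQuadratic q := isQuadratic_sum_matrix a b c
  have hopen : IsOpen {x | q x = 0}ᶜ := (isClosed_eq hq.continuous continuous_const).isOpen_compl
  have hU0 : ∀ x ∈ U, q x ≠ 0 := fun x hx => connectedComponentIn_subset _ x₀ (hU ▸ hx)
  have hUfr : ∀ x ∈ frontier U, q x = 0 := fun x hx =>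
    not_not.1 (frontier_connectedComponentIn_subset_compl hopen x₀ (hU ▸ hx))
  refine ⟨U, hU ▸ hopen.connectedComponentIn, hUc, ⟨x₀, hU ▸ mem_connectedComponentIn hx₀⟩,
    fun huniv => hU0 z (huniv ▸ mem_univ z) hz, rfl, ?_⟩
  by_cases hneg : ∀ x ∈ U, q x < 0
  · exact ⟨q, hq, hUfr, hneg⟩
  push Not at hneg
  obtain ⟨y, hyU, hy⟩ := hneg
  refine ⟨fun x => -1 * q x, hq.const_mul (-1), fun x hx =>
    mul_eq_zero_of_right _ (hUfr x hx), fun x hx => ?_⟩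
  by_contra! hle
  obtain ⟨w, hwU, hw⟩ := hUc.isPreconnected.intermediate_value hx hyU hq.continuous.continuousOn
    ⟨by linarith, hy⟩
  exact hU0 w hwU hw

theorem IsConvexQuadricIn.nontrivial (hn : 2 < n) {H S : Set (En n)}
    (h : IsConvexQuadricIn H S) : S.Nontrivial := by
  obtain ⟨-, φ, -, hφS⟩ := h
  obtain ⟨U, hUo, hUc, hUne, hU, hS, -⟩ := hφS.exists_frontier_eq
  have hrank : 1 < Module.rank ℝ (En (n - 1)) := by
    rw [← Module.finrank_eq_rank, finrank_euclideanSpace_fin]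
    exact_mod_cast (by lia : 1 < n - 1)
  refine nontrivial_of_preimage φ.injective S ?_
  rw [hS]
  exact frontier_nontrivial_of_isOpen_of_convex hrank hUo hUc hUne hU

section Slice

variable {E F : Type*} [NormedAddCommGroup E] [NormedSpace ℝ E]
  [NormedAddCommGroup F] [NormedSpace ℝ F]
  {K : Set E} {H : AffineSubspace ℝ E} {φ : F →ᵃ[ℝ] E} {U : Set F}

theorem mem_of_apply_mem_interior [Nontrivial F] (hφ : Function.Injective φ) (hφH : ∀ y, φ y ∈ H)
    (hb : Bornology.IsBounded (K ∩ H)) (hUc : Convex ℝ U) (hfr : φ ⁻¹' frontier K = frontier U)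
    {y : F} (hy : φ y ∈ interior K) : y ∈ U := by
  obtain ⟨x, hxy⟩ := exists_ne y
  obtain ⟨a, ha, b, hb, haK, hbK⟩ :=
    exists_neg_pos_lineMap_mem_frontier hb hy (hφH y) (hφH x) (hφ.ne hxy)
  have hclosure : ∀ t : ℝ, AffineMap.lineMap (φ y) (φ x) t ∈ frontier K →
      AffineMap.lineMap y x t ∈ closure U := fun t ht => by
    rw [← AffineMap.apply_lineMap] at ht
    exact frontier_subset_closure (hfr ▸ ht)
  have hsegment : y ∈ segment ℝ (AffineMap.lineMap y x a) (AffineMap.lineMap y x b) := by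
    rw [← image_segment, segment_eq_Icc (ha.trans hb).le]
    exact ⟨0, ⟨ha.le, hb.le⟩, AffineMap.lineMap_apply_zero y x⟩
  have hyU := hUc.closure.segment_subset (hclosure a haK) (hclosure b hbK) hsegment
  have hyfr : y ∉ frontier U := hfr ▸ fun hyK : φ y ∈ frontier K => hyK.2 hy
  exact interior_subset (not_not.1 fun hyi => hyfr ⟨hyU, hyi⟩)

theorem exists_affineMap_leftInverse (hφ : Function.Injective φ) :
    ∃ g : E →ᵃ[ℝ] F, Function.LeftInverse g φ := by
  obtain ⟨g, hg⟩ := LinearMap.exists_leftInverse_of_injective φ.linear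
    (LinearMap.ker_eq_bot.2 (φ.linear_injective_iff.2 hφ))
  refine ⟨g.toAffineMap - AffineMap.const ℝ E (g (φ 0)), fun z => ?_⟩
  have hφz : φ z = φ.linear z + φ 0 := congrFun φ.decomp z
  simpa [hφz] using LinearMap.congr_fun hg z

theorem exists_isSliceEquation_of_preimage_frontier [Nontrivial F] (hφ : Function.Injective φ)
    (hφH : range φ = H) (hb : Bornology.IsBounded (K ∩ H)) (hUc : Convex ℝ U)
    (hfr : φ ⁻¹' frontier K = frontier U) {q : F → ℝ} (hq : IsQuadratic q)
    (hq0 : ∀ x ∈ frontier U, q x = 0) (hqneg : ∀ x ∈ U, q x < 0) :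
    ∃ p, IsSliceEquation K H p := by
  obtain ⟨g, hg⟩ := exists_affineMap_leftInverse hφ
  have hmem : ∀ y, φ y ∈ H := fun y => hφH.subset (mem_range_self y)
  refine ⟨fun x => q (g x), hq.comp_affineMap g, hb, fun x hx hxK => ?_, fun x hx hxK => ?_⟩ <;>
    obtain ⟨z, rfl⟩ := hφH.superset hx <;> rw [hg]
  · exact hq0 z (hfr ▸ hxK)
  · exact hqneg z (mem_of_apply_mem_interior hφ hmem hb hUc hfr hxK)

end Slice

theorem IsConvexQuadricIn.exists_isSliceEquation (hn : 1 < n) {K : Set (En n)}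
    {H : AffineSubspace ℝ (En n)} (h : IsConvexQuadricIn (H : Set (En n)) (frontier K ∩ H))
    (hb : Bornology.IsBounded (K ∩ H)) : ∃ q, IsSliceEquation K H q := by
  obtain ⟨-, φ, hφH, hφ⟩ := h
  obtain ⟨U, -, hUc, -, -, hfr, q, hq, hq0, hqneg⟩ := hφ.exists_frontier_eq
  have : Nontrivial (En (n - 1)) :=
    Module.nontrivial_of_finrank_pos (R := ℝ) (by rw [finrank_euclideanSpace_fin]; lia)
  rw [← hφH, preimage_inter_range] at hfr
  exact exists_isSliceEquation_of_preimage_frontier (φ := φ.toAffineMap) φ.injective hφH hb hUc hfr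
    hq hq0 hqneg

theorem IsSliceEquation.isQuadricSurface {K : Set (En n)} {H : AffineSubspace ℝ (En n)}
    {q : En n → ℝ} {x y : En n} (hq : IsSliceEquation K H q) (hyK : y ∈ interior K) (hy : y ∈ H)
    (hx : x ∈ H) (hxy : x ≠ y) : IsQuadricSurface {x | q x = 0} := by
  obtain ⟨a, ha, b, hb, haK, hbK⟩ :=
    exists_neg_pos_lineMap_mem_frontier hq.isBounded hyK hy hx hxy
  have hline := hq.isQuadratic.apply_lineMap_eq_of_roots ha.ne hb.ne' (ha.trans hb).ne
    (hq.eq_zero _ (AffineMap.lineMap_mem a hy hx) haK)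
    (hq.eq_zero _ (AffineMap.lineMap_mem b hy hx) hbK)
  have hadd := hline 1
  have hsub := hline (-1)
  rw [AffineMap.lineMap_apply_module', one_smul, add_comm] at hadd
  rw [AffineMap.lineMap_apply_module', neg_one_smul, neg_add_eq_sub] at hsub
  refine hq.isQuadratic.isQuadricSurface (x := y) (v := x - y) ?_
  have hsecond : q (y + (x - y)) + q (y - (x - y)) = 2 * q y + 2 * q y / (a * b) := by
    rw [hadd, hsub]
    field
  rw [hsecond, Ne, add_eq_left]
  exact div_ne_zero (mul_ne_zero two_ne_zero (hq.neg y hy hyK).ne) (mul_ne_zero ha.ne hb.ne')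

end ConvexQuadrics

section SphericalFamily

variable {n : ℕ}

theorem exists_continuousOn_hyperplane_eq_sphHyp {δ : sphere (0 : En n) 1 → ℝ}
    (hδ : Continuous δ) : ∃ D : En n → ℝ, ContinuousOn D {0}ᶜ ∧
      ∀ v ≠ 0, ∃ u, (hyperplane v (D v) : Set (En n)) = sphHyp δ u := by
  let direction : ({0}ᶜ : Set (En n)) → sphere (0 : En n) 1 :=
    fun v => (homeomorphUnitSphereProd (En n) v).1
  let D : En n → ℝ := fun v => if hv : v = 0 then 0 else ‖v‖ * δ (direction ⟨v, hv⟩)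
  have hD : ∀ v : ({0}ᶜ : Set (En n)), D v = ‖(v : En n)‖ * δ (direction v) :=
    fun v => dif_neg v.2
  refine ⟨D, ?_, fun v hv => ⟨direction ⟨v, hv⟩, ?_⟩⟩
  · rw [continuousOn_iff_continuous_domRestrict, show domRestrict _ D = _ from funext hD]
    fun_prop
  · ext x
    have hinner : ⟪x, (direction ⟨v, hv⟩ : En n)⟫ = ‖v‖⁻¹ * ⟪x, v⟫ := by
      simp [direction, real_inner_smul_right]
    rw [SetLike.mem_coe, mem_hyperplane, hD ⟨v, hv⟩, sphHyp, mem_ofPred_eq, hinner,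
      inv_mul_eq_iff_eq_mul₀ (norm_ne_zero_iff.2 hv)]

theorem IsConvexQuadricIn.exists_mem_interior (hn : 2 < n) {K : Set (En n)}
    {H : AffineSubspace ℝ (En n)} (hK : Convex ℝ K) (hKsc : IsStrictlyConvexSet K)
    (h : IsConvexQuadricIn (H : Set (En n)) (frontier K ∩ H)) : ∃ y ∈ interior K, y ∈ H := by
  by_contra! hdisj
  exact (h.nontrivial hn).not_subsingleton <|
    (hKsc.subsingleton_closure_inter hK H.convex (disjoint_left.2 hdisj)).anti
      (inter_subset_inter_left _ frontier_subset_closure)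

theorem frontier_contains_open_quadric_piece_general
    (hn : 3 ≤ n) (K : Set (En n)) (hKconv : Convex ℝ K) (hKsc : IsStrictlyConvexSet K)
    (δ : sphere (0 : En n) 1 → ℝ) (hδ : Continuous δ)
    (hsec : ∀ u : sphere (0 : En n) 1,
      IsConvexQuadricIn (sphHyp δ u) (frontier K ∩ sphHyp δ u)) :
    ∃ (Q A : Set (En n)), IsRealQuadricSurface Q ∧ A.Nonempty ∧
      A ⊆ frontier K ∩ Q ∧ ∃ V : Set (En n), IsOpen V ∧ A = V ∩ frontier K := by
  obtain ⟨D, hD, hDδ⟩ := exists_continuousOn_hyperplane_eq_sphHyp hδ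
  have hquadric : ∀ v ≠ 0, IsConvexQuadricIn (hyperplane v (D v) : Set (En n))
      (frontier K ∩ hyperplane v (D v)) := fun v hv => by
    obtain ⟨u, hu⟩ := hDδ v hv
    exact hu ▸ hsec u
  have hcut : ∀ v ≠ 0, ∃ y ∈ interior K, y ∈ hyperplane v (D v) := fun v hv =>
    (hquadric v hv).exists_mem_interior hn hKconv hKsc
  have hdim : 2 < Module.finrank ℝ (En n) := by rwa [finrank_euclideanSpace_fin]
  have : Nontrivial (En n) := Module.nontrivial_of_finrank_pos (R := ℝ) (two_pos.trans hdim)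
  obtain ⟨w, hw⟩ := exists_ne (0 : En n)
  obtain ⟨v₀, hv₀, hbounded⟩ := hKsc.exists_eventually_isBounded_inter_hyperplane hKconv
    ((hcut w hw).imp fun _ => And.left) (((hquadric w hw).nontrivial hn).nonempty.mono
      inter_subset_left)
  obtain ⟨r, hr, hball⟩ := Metric.eventually_nhds_iff_ball.1
    (hbounded.and (isOpen_ne.mem_nhds hv₀))
  obtain ⟨q, ⟨v, hv, hq⟩, W, hWo, hWne, hW⟩ := exists_isSliceEquation_eq_zero_on_frontier hdim
    hKconv isOpen_ball (convex_ball v₀ r) (nonempty_ball.2 hr)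
    (hD.mono fun v hv => (hball v hv).2) (fun v hv => (hball v hv).1)
    (fun v hv => hcut v (hball v hv).2) fun v hv =>
      (hquadric v (hball v hv).2).exists_isSliceEquation (by lia) ((hball v hv).1 _)
  obtain ⟨y, hyK, hy⟩ := hcut v (hball v hv).2
  obtain ⟨x, hxK, hx⟩ := ((hquadric v (hball v hv).2).nontrivial hn).nonempty
  exact ⟨{x | q x = 0}, W ∩ frontier K,
    ⟨hq.isQuadricSurface hyK hy hx fun hxy => hxK.2 (hxy ▸ hyK), x, hq.eq_zero x hx hxK⟩, hWne,
    fun z hz => ⟨hz.2, hW z hz⟩, W, hWo, rfl⟩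

end SphericalFamily

/-- Lemma 11: under the hypotheses of Theorem 2 with K strictly convex and
regular, the frontier of K contains a nonempty relatively open piece of a real quadric
surface. -/
theorem frontier_contains_open_quadric_piece
    {n : ℕ} (hn : 3 ≤ n) (K : Set (En n)) (hKconv : Convex ℝ K) (hKcl : IsClosed K)
    (hKint : (interior K).Nonempty) (hKne : K ≠ Set.univ)
    (hKsc : IsStrictlyConvexSet K) (hKreg : IsRegularSet K)
    (δ : sphere (0 : En n) 1 → ℝ) (hδ : Continuous δ)
    (hsec : ∀ u : sphere (0 : En n) 1,
      IsConvexQuadricIn (sphHyp δ u) (frontier K ∩ sphHyp δ u)) :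
    ∃ (Q A : Set (En n)), IsRealQuadricSurface Q ∧ A.Nonempty ∧
      A ⊆ frontier K ∩ Q ∧ ∃ V : Set (En n), IsOpen V ∧ A = V ∩ frontier K :=
  frontier_contains_open_quadric_piece_general hn K hKconv hKsc δ hδ hsec
end
end
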